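/- arXiv:1001.0436 — 2 statements merged into one kernel-verified Lean document; each statement's English description precedes it below -/
import Mathlib

section
/- Fix numbers of jobs n and machines m, values v : Fin n × Fin m → ℝ with v ≥ 0, sizes s : Fin n × Fin m → ℝ with s > 0, capacities c : Fin m → ℝ with c ≥ 0, and a real β ≥ 1. Suppose F maps each edge set E to a feasible solution F(E) of the GAP[E] LP such that (i) β · ∑_{(i,j)} v(i,j)·F(E)(i,j) ≥ sup over feasible solutions y of GAP[E] LP of ∑_{(i,j)} v(i,j)·y(i,j), and (ii) F is truthful: for every E, every job i, and every set E'_i of pairs with first coordinate i, letting E' = (E \ E_i) ∪ E'_i, ∑_{(i,j) ∈ E_i} v(i,j)·F(E)(i,j) ≥ ∑_{(i,j) ∈ E_i} v(i,j)·F(E')(i,j). Then there exists a map A from edge sets to finitely supported probability distributions over integral feasible assignments such that every assignment in the support of A(E) is feasible for GAP[E], A is truthful in expectation (for every E, i, E'_i as above, the expected value ∑_{(i,j) ∈ E_i} v(i,j)·x(i,j) under A(E) is at least that under A(E')), and for every E, 2β · E_{x ~ A(E)}[∑_{(i,j)} v(i,j)·x(i,j)] ≥ the maximum welfare of an integral feasible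 assignment for GAP[E]. -/
/-- Feasibility for the GAP[E] LP. -/
def GAPLPFeasible {n m : ℕ} (s : Fin n × Fin m → ℝ) (c : Fin m → ℝ)
    (E : Finset (Fin n × Fin m)) (x : Fin n × Fin m → ℝ) : Prop :=
  (∀ p, 0 ≤ x p ∧ x p ≤ 1) ∧ (∀ p, p ∉ E → x p = 0) ∧
    (∀ i, ∑ j, x (i, j) ≤ 1) ∧ (∀ j, ∑ i, s (i, j) * x (i, j) ≤ c j)

/-- Welfare of a (fractional or integral) GAP solution. -/
def GAPWelfare {n m : ℕ} (v : Fin n × Fin m → ℝ) (x : Fin n × Fin m → ℝ) : ℝ :=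
  ∑ p : Fin n × Fin m, v p * x p

/-!
Give each machine a row of unit-size slots and pour its fractional jobs into them in order of
decreasing size. The resulting job/slot matrix is doubly substochastic, so by Birkhoff's theorem it
is a convex combination of matchings supported on its nonzero entries. In such a matching, the job
in slot `t + 1` is no larger than the average size of the content of slot `t`, so the jobs of a
machine outside its slot `0` together fit its capacity, while the single job in slot `0` fits on
its own. Using slot `0` or the other slots with probability `1/2` each yields a distribution over
integral assignments whose mean is exactly half of the LP solution. As every valuation is linear in
the assignment, truthfulness is inherited and the welfare is exactly halved. Edges whose size
exceeds the capacity of their machine must be discarded first; integral assignments never use them.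
-/

section ConvexHull

variable {R V : Type*} [Field R] [LinearOrder R] [IsStrictOrderedRing R] [AddCommGroup V]
  [Module R V]

theorem mem_convexHull_sep_of_nonneg {ι : Type*} {S : Set V} {x : V} (f : ι → V →ₗ[R] R)
    (hf : ∀ i, ∀ z ∈ S, 0 ≤ f i z) (hx : x ∈ convexHull R S) :
    x ∈ convexHull R {z ∈ S | ∀ i, f i x = 0 → f i z = 0} := by
  obtain ⟨κ, _, z, w, hzS, -, hw, hw_sum, rfl⟩ := eq_pos_convex_span_of_mem_convexHull hx
  have hz (k : κ) : z k ∈ S := hzS ⟨k, rfl⟩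
  refine mem_convexHull_of_exists_fintype w z (fun k => (hw k).le) hw_sum
    (fun k => ⟨hz k, fun i hi => ?_⟩) rfl
  simp only [map_sum, map_smul, smul_eq_mul] at hi
  have hterm := (Finset.sum_eq_zero_iff_of_nonneg fun l _ =>
    mul_nonneg (hw l).le (hf i _ (hz l))).1 hi k (Finset.mem_univ k)
  exact (mul_eq_zero.1 hterm).resolve_left (hw k).ne'

theorem exists_weights_of_mem_convexHull {S : Set V} {x : V} (hx : x ∈ convexHull R S) :
    ∃ (D : Finset V) (p : V → R), (∀ z ∈ D, z ∈ S) ∧ (∀ z, 0 ≤ p z) ∧ ∑ z ∈ D, p z = 1 ∧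
      ∑ z ∈ D, p z • z = x := by
  rw [convexHull_eq_union] at hx
  simp only [Set.mem_iUnion] at hx
  obtain ⟨D, hDS, -, hx⟩ := hx
  obtain ⟨w, hw, hw_sum, hwx⟩ := Finset.mem_convexHull'.1 hx
  have habs : ∀ z ∈ D, |w z| = w z := fun z hz => abs_of_nonneg (hw z hz)
  refine ⟨D, fun z => |w z|, fun z hz => hDS hz, fun z => abs_nonneg _, ?_, ?_⟩
  · rw [Finset.sum_congr rfl habs, hw_sum]
  · exact (Finset.sum_congr rfl fun z hz => congrArg (· • z) (habs z hz)).trans hwx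

end ConvexHull

section Substochastic

variable {R I J : Type*} [Fintype I] [Fintype J]

section Semiring

variable [Semiring R] [PartialOrder R]

/-- Doubly substochastic matrices, i.e. fractional bipartite matchings between rows and columns. -/
structure IsDoublySubstochastic (M : Matrix I J R) : Prop where
  nonneg : ∀ i j, 0 ≤ M i j
  row_sum_le_one : ∀ i, ∑ j, M i j ≤ 1
  col_sum_le_one : ∀ j, ∑ i, M i j ≤ 1

/-- Incidence matrices of bipartite matchings, equivalently partial permutation matrices. -/
structure IsMatchingMatrix (M : Matrix I J R) : Prop extends IsDoublySubstochastic M where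
  eq_zero_or_one : ∀ i j, M i j = 0 ∨ M i j = 1

variable [IsOrderedRing R] [DecidableEq I] [DecidableEq J]

theorem isDoublySubstochastic_toBlocks₁₂ {B : Matrix (I ⊕ J) (I ⊕ J) R}
    (hB : B ∈ doublyStochastic R (I ⊕ J)) : IsDoublySubstochastic B.toBlocks₁₂ where
  nonneg _ _ := nonneg_of_mem_doublyStochastic hB
  row_sum_le_one i := by
    rw [← sum_row_of_mem_doublyStochastic hB (Sum.inl i), Fintype.sum_sum_type]
    exact le_add_of_nonneg_left (Finset.sum_nonneg fun _ _ => nonneg_of_mem_doublyStochastic hB)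
  col_sum_le_one j := by
    rw [← sum_col_of_mem_doublyStochastic hB (Sum.inr j), Fintype.sum_sum_type]
    exact le_add_of_nonneg_right (Finset.sum_nonneg fun _ _ => nonneg_of_mem_doublyStochastic hB)

theorem isMatchingMatrix_toBlocks₁₂_permMatrix (σ : Equiv.Perm (I ⊕ J)) :
    IsMatchingMatrix (σ.permMatrix R).toBlocks₁₂ where
  toIsDoublySubstochastic := isDoublySubstochastic_toBlocks₁₂ permMatrix_mem_doublyStochastic
  eq_zero_or_one i j := by
    simp only [Matrix.toBlocks₁₂, Matrix.of_apply, PEquiv.toMatrix_apply]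
    split_ifs <;> simp

end Semiring

namespace IsDoublySubstochastic

variable [Field R] [LinearOrder R] [IsStrictOrderedRing R] {A : Matrix I J R}

theorem fromBlocks_mem_doublyStochastic [DecidableEq I] [DecidableEq J]
    (hA : IsDoublySubstochastic A) :
    Matrix.fromBlocks (Matrix.diagonal fun i => 1 - ∑ j, A i j) A A.transpose
      (Matrix.diagonal fun j => 1 - ∑ i, A i j) ∈ doublyStochastic R (I ⊕ J) := by
  rw [mem_doublyStochastic_iff_sum]
  refine ⟨?_, ?_, ?_⟩
  · rintro (i | j) (i' | j')
    · rw [Matrix.fromBlocks_apply₁₁, Matrix.diagonal_apply]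
      split_ifs
      exacts [sub_nonneg.2 (hA.row_sum_le_one i), le_rfl]
    · exact hA.nonneg i j'
    · exact hA.nonneg i' j
    · rw [Matrix.fromBlocks_apply₂₂, Matrix.diagonal_apply]
      split_ifs
      exacts [sub_nonneg.2 (hA.col_sum_le_one j), le_rfl]
  · rintro (i | j) <;> simp [Matrix.diagonal_apply]
  · rintro (i | j) <;> simp [Matrix.diagonal_apply]

theorem mem_convexHull_isMatchingMatrix (hA : IsDoublySubstochastic A) :
    A ∈ convexHull R {M : Matrix I J R | IsMatchingMatrix M} := by
  classical
  have hB := hA.fromBlocks_mem_doublyStochastic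
  rw [← SetLike.mem_coe, doublyStochastic_eq_convexHull_permMatrix] at hB
  have hlin : IsLinearMap R (Matrix.toBlocks₁₂ : Matrix (I ⊕ J) (I ⊕ J) R → Matrix I J R) :=
    ⟨fun _ _ => rfl, fun _ _ => rfl⟩
  refine convexHull_min ?_ ((convex_convexHull R _).is_linear_preimage hlin) hB
  rintro _ ⟨σ, rfl⟩
  exact subset_convexHull R _ (isMatchingMatrix_toBlocks₁₂_permMatrix σ)

theorem mem_convexHull_isMatchingMatrix_support (hA : IsDoublySubstochastic A) :
    A ∈ convexHull R {M : Matrix I J R | IsMatchingMatrix M ∧ ∀ i j, A i j = 0 → M i j = 0} := by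
  have h := mem_convexHull_sep_of_nonneg (S := {M : Matrix I J R | IsMatchingMatrix M})
    (fun q : I × J => Matrix.entryLinearMap R R q.1 q.2) (fun q _ hM => hM.nonneg q.1 q.2)
    hA.mem_convexHull_isMatchingMatrix
  simpa only [Prod.forall, Matrix.entryLinearMap_apply, Set.mem_ofPred_eq] using h

end IsDoublySubstochastic

end Substochastic

section Slotting

variable {R I : Type*} [Semiring R] [PartialOrder R] [Fintype I] {N : ℕ}

/-- A Shmoys–Tardos slotting of the fractional load `x` of a machine: the amount `y i t` of job `i`
is put into the unit-size slot `t`, each slot is full if the next one is used, and the jobs in each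
slot are at least as large (with respect to the sizes `s`) as those in the next one. -/
structure IsSlotting (s x : I → R) (y : I → Fin (N + 1) → R) : Prop where
  nonneg : ∀ i t, 0 ≤ y i t
  sum_slots : ∀ i, ∑ t, y i t = x i
  sum_jobs_le_one : ∀ t, ∑ i, y i t ≤ 1
  sum_jobs_eq_one : ∀ i (t : Fin N), y i t.succ ≠ 0 → ∑ k, y k t.castSucc = 1
  size_le : ∀ i k (t : Fin N), y i t.succ ≠ 0 → y k t.castSucc ≠ 0 → s i ≤ s k

theorem IsSlotting.comp_equiv {I' : Type*} [Fintype I'] {s x : I → R} {y : I → Fin (N + 1) → R}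
    (h : IsSlotting s x y) (e : I' ≃ I) : IsSlotting (s ∘ e) (x ∘ e) (y ∘ e) where
  nonneg _ := h.nonneg _
  sum_slots _ := h.sum_slots _
  sum_jobs_le_one t := (e.sum_comp fun i => y i t).trans_le (h.sum_jobs_le_one t)
  sum_jobs_eq_one _ t hi := (e.sum_comp fun i => y i t.castSucc).trans (h.sum_jobs_eq_one _ t hi)
  size_le _ _ := h.size_le _ _

variable [IsOrderedRing R]

theorem sum_mul_le_of_sum_le_one {s w : I → R} {B : R} (hB : 0 ≤ B) (hw : ∀ i, 0 ≤ w i)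
    (hw_sum : ∑ i, w i ≤ 1) (hsB : ∀ i, w i ≠ 0 → s i ≤ B) : ∑ i, s i * w i ≤ B :=
  calc ∑ i, s i * w i ≤ ∑ i, B * w i := Finset.sum_le_sum fun i _ => by
        rcases eq_or_ne (w i) 0 with hi | hi
        · simp [hi]
        · exact mul_le_mul_of_nonneg_right (hsB i hi) (hw i)
    _ = B * ∑ i, w i := (Finset.mul_sum _ _ _).symm
    _ ≤ B := mul_le_of_le_one_right hB hw_sum

namespace IsSlotting

variable {s x : I → R} {y : I → Fin (N + 1) → R}

theorem size_le_sum_mul (h : IsSlotting s x y) {i : I} {t : Fin N} (hi : y i t.succ ≠ 0) :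
    s i ≤ ∑ k, s k * y k t.castSucc :=
  calc s i = ∑ k, s i * y k t.castSucc := by
        rw [← Finset.mul_sum, h.sum_jobs_eq_one i t hi, mul_one]
    _ ≤ ∑ k, s k * y k t.castSucc := Finset.sum_le_sum fun k _ => by
        rcases eq_or_ne (y k t.castSucc) 0 with hk | hk
        · simp [hk]
        · exact mul_le_mul_of_nonneg_right (h.size_le i k t hi hk) (h.nonneg k _)

theorem sum_mul_sum_succ_le (h : IsSlotting s x y) (hs : ∀ i, 0 ≤ s i)
    {z : I → Fin (N + 1) → R} (hz : ∀ i t, 0 ≤ z i t) (hz_sum : ∀ t, ∑ i, z i t ≤ 1)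
    (hzy : ∀ i t, y i t = 0 → z i t = 0) :
    ∑ i, s i * ∑ t : Fin N, z i t.succ ≤ ∑ i, s i * x i := by
  have hload (t : Fin (N + 1)) : 0 ≤ ∑ k, s k * y k t :=
    Finset.sum_nonneg fun k _ => mul_nonneg (hs k) (h.nonneg k t)
  calc ∑ i, s i * ∑ t : Fin N, z i t.succ = ∑ t : Fin N, ∑ i, s i * z i t.succ := by
        simp only [Finset.mul_sum]
        exact Finset.sum_comm
    _ ≤ ∑ t : Fin N, ∑ k, s k * y k t.castSucc := Finset.sum_le_sum fun t _ =>
        sum_mul_le_of_sum_le_one (hload _) (fun i => hz i _) (hz_sum _)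
          fun i hi => h.size_le_sum_mul fun hy => hi (hzy i _ hy)
    _ ≤ ∑ t : Fin (N + 1), ∑ k, s k * y k t := by
        rw [Fin.sum_univ_castSucc]
        exact le_add_of_nonneg_right (hload _)
    _ = ∑ i, s i * x i := by
        rw [Finset.sum_comm]
        simp only [← Finset.mul_sum, h.sum_slots]

end IsSlotting

end Slotting

section SlotFill

variable {R : Type*} [Ring R] [LinearOrder R] {a b : R} {t : ℕ}

/-- When mass `a` is poured into unit slots `[0, 1], [1, 2], …` in order, the part of it that lies
in the slot `[t, t + 1]`. -/
def slotFill (a : R) (t : ℕ) : R := max 0 (min 1 (a - t))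

theorem slotFill_nonneg : 0 ≤ slotFill a t := le_max_left _ _

variable [IsStrictOrderedRing R]

theorem slotFill_le_one : slotFill a t ≤ 1 := max_le zero_le_one (min_le_left _ _)

theorem slotFill_mono (h : a ≤ b) : slotFill a t ≤ slotFill b t := by
  unfold slotFill
  gcongr

theorem slotFill_eq_zero (h : a ≤ t) : slotFill a t = 0 :=
  max_eq_left ((min_le_right _ _).trans (sub_nonpos.2 h))

theorem slotFill_eq_one (h : (t : R) + 1 ≤ a) : slotFill a t = 1 := by
  rw [slotFill, min_eq_left (le_sub_iff_add_le'.2 h), max_eq_right zero_le_one]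

theorem sum_range_slotFill (ha : 0 ≤ a) (N : ℕ) :
    ∑ t ∈ Finset.range N, slotFill a t = min (N : R) a := by
  induction N with
  | zero => simp [ha]
  | succ N ih =>
    rw [Finset.sum_range_succ, ih]
    rcases le_total a N with h | h
    · rw [slotFill_eq_zero h, min_eq_right h, min_eq_right (h.trans (by simp)), add_zero]
    · have hsub : 0 ≤ min 1 (a - N) := le_min zero_le_one (sub_nonneg.2 h)
      rw [slotFill, max_eq_right hsub, min_eq_left h, ← min_add_add_left, add_sub_cancel,
        Nat.cast_succ]

theorem lt_of_slotFill_lt (h : slotFill a t < slotFill b t) : t < b := by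
  by_contra! hb
  exact (slotFill_nonneg.trans_lt h).ne' (slotFill_eq_zero hb)

theorem lt_add_one_of_slotFill_lt (h : slotFill a t < slotFill b t) : a < t + 1 := by
  by_contra! ha
  exact (h.trans_le slotFill_le_one).ne (slotFill_eq_one ha)

end SlotFill

section PartialSum

theorem sum_fin_succ_sub_castSucc {G : Type*} [AddCommGroup G] {n : ℕ} (g : Fin (n + 1) → G) :
    ∑ i : Fin n, (g i.succ - g i.castSucc) = g (Fin.last n) - g 0 := by
  rw [Finset.sum_sub_distrib, sub_eq_sub_iff_add_eq_add, add_comm, ← Fin.sum_univ_succ,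
    Fin.sum_univ_castSucc, add_comm]

variable {R : Type*} [Semiring R] [PartialOrder R] [IsOrderedRing R] {n : ℕ} {x : Fin n → R}

theorem monotone_partialSum (hx : ∀ i, 0 ≤ x i) : Monotone (Fin.partialSum x) :=
  Fin.monotone_iff_le_succ.2 fun i => by
    rw [Fin.partialSum_succ]
    exact le_add_of_nonneg_right (hx i)

theorem partialSum_nonneg (hx : ∀ i, 0 ≤ x i) (k : Fin (n + 1)) : 0 ≤ Fin.partialSum x k :=
  (Fin.partialSum_zero x).symm.trans_le (monotone_partialSum hx (Fin.zero_le k))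

theorem partialSum_le (hx : ∀ i, x i ≤ 1) (k : Fin (n + 1)) : Fin.partialSum x k ≤ (k : ℕ) := by
  induction k using Fin.induction with
  | zero => simp
  | succ i ih =>
    rw [Fin.partialSum_succ, Fin.val_succ, Nat.cast_succ]
    exact add_le_add ih (hx i)

end PartialSum

section SlottingExistence

variable {R : Type*} [Ring R] [LinearOrder R] [IsStrictOrderedRing R] {n : ℕ}

theorem isSlotting_of_antitone {s x : Fin n → R} (hs : Antitone s)
    (hx₀ : ∀ i, 0 ≤ x i) (hx₁ : ∀ i, x i ≤ 1) :
    IsSlotting s x fun i (t : Fin (n + 1)) =>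
      slotFill (Fin.partialSum x i.succ) t - slotFill (Fin.partialSum x i.castSucc) t := by
  set P := Fin.partialSum x with hP_def
  have hP : Monotone P := monotone_partialSum hx₀
  have hfill (i : Fin n) (t : ℕ) : slotFill (P i.castSucc) t ≤ slotFill (P i.succ) t :=
    slotFill_mono (hP i.castSucc_le_succ)
  have hlt {i : Fin n} {t : ℕ} (h : slotFill (P i.succ) t - slotFill (P i.castSucc) t ≠ 0) :
      slotFill (P i.castSucc) t < slotFill (P i.succ) t :=
    (hfill i t).lt_of_ne fun heq => h (sub_eq_zero.2 heq.symm)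
  have hsum_slots (k : Fin (n + 1)) : ∑ t : Fin (n + 1), slotFill (P k) t = P k := by
    rw [Fin.sum_univ_eq_sum_range (slotFill (P k)), sum_range_slotFill (partialSum_nonneg hx₀ k)]
    exact min_eq_right ((partialSum_le hx₁ k).trans (by exact_mod_cast k.is_lt.le))
  have hsum_jobs (t : ℕ) :
      ∑ i : Fin n, (slotFill (P i.succ) t - slotFill (P i.castSucc) t)
        = slotFill (P (Fin.last n)) t := by
    rw [sum_fin_succ_sub_castSucc fun k => slotFill (P k) t, hP_def, Fin.partialSum_zero,
      slotFill_eq_zero (Nat.cast_nonneg t), sub_zero]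
  refine ⟨fun i t => sub_nonneg.2 (hfill i t), fun i => ?_, fun t => ?_, fun i t hi => ?_,
    fun i k t hi hk => hs ?_⟩
  · rw [Finset.sum_sub_distrib, hsum_slots, hsum_slots, hP_def, Fin.partialSum_succ,
      add_sub_cancel_left]
  · exact (hsum_jobs t).trans_le slotFill_le_one
  · have hreach := lt_of_slotFill_lt (hlt hi)
    rw [Fin.val_succ, Nat.cast_succ] at hreach
    exact (hsum_jobs t).trans (slotFill_eq_one (hreach.le.trans (hP (Fin.le_last _))))
  · have hreach := lt_of_slotFill_lt (hlt hi)
    rw [Fin.val_succ, Nat.cast_succ] at hreach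
    have hstart : P k.castSucc < t.castSucc.val + 1 := lt_add_one_of_slotFill_lt (hlt hk)
    exact Fin.castSucc_lt_succ_iff.1 (hP.reflect_lt (hstart.trans hreach))

theorem exists_isSlotting (s : Fin n → R) {x : Fin n → R} (hx₀ : ∀ i, 0 ≤ x i)
    (hx₁ : ∀ i, x i ≤ 1) : ∃ y : Fin n → Fin (n + 1) → R, IsSlotting s x y := by
  set σ := Tuple.sort fun i => -s i
  have hσ : Antitone (s ∘ σ) := fun i k hik =>
    neg_le_neg_iff.1 (Tuple.monotone_sort (fun i => -s i) hik)
  have h := (isSlotting_of_antitone (x := x ∘ σ) hσ (fun i => hx₀ (σ i))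
    fun i => hx₁ (σ i)).comp_equiv σ.symm
  simp only [Function.comp_assoc, Equiv.self_comp_symm, Function.comp_id] at h
  exact ⟨_, h⟩

end SlottingExistence

section SlotAssignment

variable {R I J T : Type*} [Semiring R]

/-- The job/machine assignment induced by a matrix that assigns jobs to slots of machines, when only
the slots in `S` are used. -/
def slotAssignment (S : Finset T) : Matrix I (J × T) R →ₗ[R] I × J → R where
  toFun M q := ∑ t ∈ S, M q.1 (q.2, t)
  map_add' _ _ := funext fun _ => Finset.sum_add_distrib
  map_smul' _ _ := funext fun _ => (Finset.mul_sum _ _ _).symm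

theorem slotAssignment_apply (S : Finset T) (M : Matrix I (J × T) R) (q : I × J) :
    slotAssignment S M q = ∑ t ∈ S, M q.1 (q.2, t) := rfl

theorem slotAssignment_add_compl [Fintype T] [DecidableEq T] (S : Finset T)
    (M : Matrix I (J × T) R) :
    slotAssignment S M + slotAssignment Sᶜ M = slotAssignment Finset.univ M :=
  funext fun _ => Finset.sum_add_sum_compl _ _

variable [PartialOrder R] [IsOrderedRing R]

theorem sum_eq_zero_or_one {S : Finset T} {f : T → R} (hf : ∀ t, f t = 0 ∨ f t = 1)
    (hsum : ∑ t ∈ S, f t ≤ 1) : ∑ t ∈ S, f t = 0 ∨ ∑ t ∈ S, f t = 1 := by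
  have hf₀ (t : T) : 0 ≤ f t := by rcases hf t with h | h <;> simp [h]
  by_cases hone : ∃ t ∈ S, f t = 1
  · obtain ⟨t, htS, ht⟩ := hone
    exact .inr (hsum.antisymm (ht ▸ Finset.single_le_sum (fun t _ => hf₀ t) htS))
  · push Not at hone
    exact .inl (Finset.sum_eq_zero fun t ht => (hf t).resolve_right (hone t ht))

variable [Fintype I] [Fintype J] [Fintype T] {M : Matrix I (J × T) R}

theorem slotAssignment_nonneg (hM : IsDoublySubstochastic M) (S : Finset T) (q : I × J) :
    0 ≤ slotAssignment S M q :=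
  Finset.sum_nonneg fun _ _ => hM.nonneg _ _

theorem sum_slotAssignment_le_one (hM : IsDoublySubstochastic M) (S : Finset T) (i : I) :
    ∑ j, slotAssignment S M (i, j) ≤ 1 :=
  calc ∑ j, slotAssignment S M (i, j) ≤ ∑ j, ∑ t, M i (j, t) := Finset.sum_le_sum fun j _ =>
        Finset.sum_le_univ_sum_of_nonneg fun t => hM.nonneg i (j, t)
    _ = ∑ k, M i k := (Fintype.sum_prod_type _).symm
    _ ≤ 1 := hM.row_sum_le_one i

theorem slotAssignment_le_one (hM : IsDoublySubstochastic M) (S : Finset T) (q : I × J) :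
    slotAssignment S M q ≤ 1 :=
  (Finset.single_le_sum (f := fun j => slotAssignment S M (q.1, j))
    (fun _ _ => slotAssignment_nonneg hM S _) (Finset.mem_univ q.2)).trans
    (sum_slotAssignment_le_one hM S q.1)

theorem slotAssignment_eq_zero_or_one (hM : IsMatchingMatrix M) (S : Finset T) (q : I × J) :
    slotAssignment S M q = 0 ∨ slotAssignment S M q = 1 :=
  sum_eq_zero_or_one (fun _ => hM.eq_zero_or_one _ _)
    (slotAssignment_le_one hM.toIsDoublySubstochastic S q)

end SlotAssignment

section Rounding

variable {n m N : ℕ} {s x : Fin n × Fin m → ℝ} {c : Fin m → ℝ} {E : Finset (Fin n × Fin m)}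

/-- The integral feasible assignments for GAP[E], as vectors indexed by job/machine pairs. -/
def integralAssignments (s : Fin n × Fin m → ℝ) (c : Fin m → ℝ) (E : Finset (Fin n × Fin m)) :
    Set (Fin n × Fin m → ℝ) :=
  {z | GAPLPFeasible s c E z ∧ ∀ q, z q = 0 ∨ z q = 1}

theorem slotAssignment_mem_integralAssignments {T : Type*} [Fintype T]
    {M : Matrix (Fin n) (Fin m × T) ℝ} (hM : IsMatchingMatrix M)
    (hME : ∀ i j t, (i, j) ∉ E → M i (j, t) = 0) {S : Finset T}
    (hload : ∀ j, ∑ i, s (i, j) * slotAssignment S M (i, j) ≤ c j) :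
    slotAssignment S M ∈ integralAssignments s c E :=
  have hM' := hM.toIsDoublySubstochastic
  ⟨⟨fun q => ⟨slotAssignment_nonneg hM' S q, slotAssignment_le_one hM' S q⟩,
    fun _ hq => Finset.sum_eq_zero fun t _ => hME _ _ t hq,
    sum_slotAssignment_le_one hM' S, hload⟩, slotAssignment_eq_zero_or_one hM S⟩

namespace GAPLPFeasible

theorem capacity_nonneg (hx : GAPLPFeasible s c E x) (hs : ∀ q, 0 ≤ s q) (j : Fin m) : 0 ≤ c j :=
  (Finset.sum_nonneg fun i _ => mul_nonneg (hs (i, j)) (hx.1 (i, j)).1).trans (hx.2.2.2 j)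

theorem size_le_capacity_of_eq_one (hx : GAPLPFeasible s c E x) (hs : ∀ q, 0 ≤ s q)
    {q : Fin n × Fin m} (hq : x q = 1) : s q ≤ c q.2 :=
  calc s q = s (q.1, q.2) * x (q.1, q.2) := by rw [Prod.mk.eta, hq, mul_one]
    _ ≤ ∑ i, s (i, q.2) * x (i, q.2) :=
        Finset.single_le_sum (f := fun i => s (i, q.2) * x (i, q.2))
          (fun i _ => mul_nonneg (hs _) (hx.1 _).1) (Finset.mem_univ q.1)
    _ ≤ c q.2 := hx.2.2.2 q.2

theorem mono {E' : Finset (Fin n × Fin m)} (hx : GAPLPFeasible s c E x) (h : E ⊆ E') :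
    GAPLPFeasible s c E' x :=
  ⟨hx.1, fun q hq => hx.2.1 q fun hqE => hq (h hqE), hx.2.2⟩

variable {y : Fin m → Fin n → Fin (N + 1) → ℝ}

theorem isDoublySubstochastic_slots (hx : GAPLPFeasible s c E x)
    (hy : ∀ j, IsSlotting (fun i => s (i, j)) (fun i => x (i, j)) (y j)) :
    IsDoublySubstochastic (Matrix.of fun i (k : Fin m × Fin (N + 1)) => y k.1 i k.2) where
  nonneg i k := (hy k.1).nonneg i k.2
  row_sum_le_one i := by
    simpa only [Matrix.of_apply, Fintype.sum_prod_type, (hy _).sum_slots] using hx.2.2.1 i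
  col_sum_le_one k := (hy k.1).sum_jobs_le_one k.2

variable {M : Matrix (Fin n) (Fin m × Fin (N + 1)) ℝ}

theorem slotAssignment_zero_mem (hx : GAPLPFeasible s c E x) (hs : ∀ q, 0 ≤ s q)
    (hE : ∀ q ∈ E, s q ≤ c q.2) (hM : IsMatchingMatrix M)
    (hME : ∀ i j t, (i, j) ∉ E → M i (j, t) = 0) :
    slotAssignment {0} M ∈ integralAssignments s c E := by
  refine slotAssignment_mem_integralAssignments hM hME fun j => ?_
  simp only [slotAssignment_apply, Finset.sum_singleton]
  refine sum_mul_le_of_sum_le_one (hx.capacity_nonneg hs j) (fun i => hM.nonneg i (j, 0))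
    (hM.col_sum_le_one (j, 0)) fun i hi => hE (i, j) ?_
  by_contra hij
  exact hi (hME i j 0 hij)

theorem slotAssignment_compl_zero_mem (hx : GAPLPFeasible s c E x) (hs : ∀ q, 0 ≤ s q)
    (hy : ∀ j, IsSlotting (fun i => s (i, j)) (fun i => x (i, j)) (y j)) (hM : IsMatchingMatrix M)
    (hME : ∀ i j t, (i, j) ∉ E → M i (j, t) = 0) (hMy : ∀ i j t, y j i t = 0 → M i (j, t) = 0) :
    slotAssignment {0}ᶜ M ∈ integralAssignments s c E := by
  refine slotAssignment_mem_integralAssignments hM hME fun j => ?_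
  simp only [slotAssignment_apply, ← Fin.image_succ_univ,
    Finset.sum_image (Fin.succ_injective N).injOn]
  exact ((hy j).sum_mul_sum_succ_le (fun i => hs (i, j)) (z := fun i t => M i (j, t))
    (fun i t => hM.nonneg i (j, t)) (fun t => hM.col_sum_le_one (j, t))
    fun i t => hMy i j t).trans (hx.2.2.2 j)

theorem half_smul_mem_convexHull (hx : GAPLPFeasible s c E x) (hs : ∀ q, 0 ≤ s q)
    (hE : ∀ q ∈ E, s q ≤ c q.2) :
    (1 / 2 : ℝ) • x ∈ convexHull ℝ (integralAssignments s c E) := by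
  choose y hy using fun j => exists_isSlotting (fun i => s (i, j)) (x := fun i => x (i, j))
    (fun i => (hx.1 (i, j)).1) fun i => (hx.1 (i, j)).2
  have hmatchings := (hx.isDoublySubstochastic_slots hy).mem_convexHull_isMatchingMatrix_support
  set A := Matrix.of fun i (k : Fin m × Fin (n + 1)) => y k.1 i k.2
  have hAx : slotAssignment Finset.univ A = x := funext fun q => (hy q.2).sum_slots q.1
  have hyE (i j t) (hij : (i, j) ∉ E) : y j i t = 0 :=
    (Finset.sum_eq_zero_iff_of_nonneg fun t _ => (hy j).nonneg i t).1
      (((hy j).sum_slots i).trans (hx.2.1 _ hij)) t (Finset.mem_univ t)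
  suffices h : A ∈ ((1 / 2 : ℝ) • slotAssignment Finset.univ : _ →ₗ[ℝ] _) ⁻¹'
      convexHull ℝ (integralAssignments s c E) by
    rwa [Set.mem_preimage, LinearMap.smul_apply, hAx] at h
  refine convexHull_min ?_ ((convex_convexHull ℝ _).linear_preimage _) hmatchings
  rintro M ⟨hM, hMA⟩
  have hME (i j t) (hij : (i, j) ∉ E) : M i (j, t) = 0 := hMA i (j, t) (hyE i j t hij)
  have hfirst := hx.slotAssignment_zero_mem hs hE hM hME
  have hrest := hx.slotAssignment_compl_zero_mem hs hy hM hME fun i j t => hMA i (j, t)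
  rw [Set.mem_preimage, LinearMap.smul_apply, ← slotAssignment_add_compl {0}, smul_add]
  exact convex_convexHull ℝ _ (subset_convexHull ℝ _ hfirst) (subset_convexHull ℝ _ hrest)
    (by norm_num) (by norm_num) (by norm_num)

end GAPLPFeasible

theorem mem_integralAssignments_filter {z : Fin n × Fin m → ℝ} (hs : ∀ q, 0 ≤ s q)
    (hz : z ∈ integralAssignments s c E) :
    z ∈ integralAssignments s c (E.filter fun q => s q ≤ c q.2) := by
  refine ⟨⟨hz.1.1, fun q hq => (hz.2 q).resolve_right fun hq₁ => hq ?_, hz.1.2.2⟩, hz.2⟩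
  refine Finset.mem_filter.2 ⟨?_, hz.1.size_le_capacity_of_eq_one hs hq₁⟩
  by_contra hqE
  exact zero_ne_one ((hz.1.2.1 q hqE).symm.trans hq₁)

end Rounding

section Truthful

variable {R I J : Type*} [CommSemiring R] [PartialOrder R] [DecidableEq I] [DecidableEq J]

/-- Truthfulness of a mechanism `F` with values `v`: no job `i` gains, with respect to its true
edges `E_i`, by reporting another set `E'` of incident edges instead. -/
def IsTruthful (v : I × J → R) (F : Finset (I × J) → I × J → R) : Prop :=
  ∀ (E E' : Finset (I × J)) (i : I), (∀ q ∈ E', q.1 = i) →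
    ∑ q ∈ E.filter (fun q => q.1 = i), v q * F ((E \ E.filter (fun q => q.1 = i)) ∪ E') q
      ≤ ∑ q ∈ E.filter (fun q => q.1 = i), v q * F E q

namespace IsTruthful

variable {v : I × J → R} {F : Finset (I × J) → I × J → R}

theorem const_smul [IsOrderedRing R] (hF : IsTruthful v F) {r : R} (hr : 0 ≤ r) :
    IsTruthful v fun E => r • F E := by
  intro E E' i hE'
  simp only [Pi.smul_apply, smul_eq_mul, mul_left_comm (v _) r, ← Finset.mul_sum]
  exact mul_le_mul_of_nonneg_left (hF E E' i hE') hr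

theorem comp_filter (hF : IsTruthful v F) (hF₀ : ∀ E, ∀ q ∉ E, F E q = 0) (P : I × J → Prop)
    [DecidablePred P] : IsTruthful v fun E => F (E.filter P) := by
  intro E E' i hE'
  have hreport : ((E \ E.filter (fun q => q.1 = i)) ∪ E').filter P
      = (E.filter P \ (E.filter P).filter (fun q => q.1 = i)) ∪ E'.filter P := by
    ext q
    simp only [Finset.mem_filter, Finset.mem_union, Finset.mem_sdiff]
    tauto
  have hdiscard (G : Finset (I × J)) :
      ∑ q ∈ E.filter (fun q => q.1 = i), v q * F (G.filter P) q
        = ∑ q ∈ (E.filter P).filter (fun q => q.1 = i), v q * F (G.filter P) q := by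
    rw [Finset.filter_comm]
    refine (Finset.sum_filter_of_ne fun q _ hq => ?_).symm
    by_contra hPq
    exact hq (by rw [hF₀ _ q (by simp [hPq]), mul_zero])
  rw [hdiscard, hdiscard, hreport]
  exact hF _ _ i fun q hq => hE' q (Finset.mem_filter.1 hq).1

end IsTruthful

end Truthful

theorem sum_mul_sum_eq_of_sum_smul_eq {R ι : Type*} [CommSemiring R] {D : Finset (ι → R)}
    {p : (ι → R) → R} {x : ι → R} (hx : ∑ z ∈ D, p z • z = x) (T : Finset ι) (v : ι → R) :
    ∑ z ∈ D, p z * ∑ q ∈ T, v q * z q = ∑ q ∈ T, v q * x q := by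
  subst hx
  simp only [Finset.sum_apply, Pi.smul_apply, smul_eq_mul, Finset.mul_sum]
  rw [Finset.sum_comm]
  exact Finset.sum_congr rfl fun q _ => Finset.sum_congr rfl fun z _ => mul_left_comm _ _ _

theorem GAPWelfare_smul {n m : ℕ} (v x : Fin n × Fin m → ℝ) (r : ℝ) :
    GAPWelfare v (r • x) = r * GAPWelfare v x := by
  simp only [GAPWelfare, Pi.smul_apply, smul_eq_mul, mul_left_comm (v _) r, Finset.mul_sum]

theorem stmt13_general (n m : ℕ) (v s : Fin n × Fin m → ℝ) (c : Fin m → ℝ)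
    (hs : ∀ p, 0 ≤ s p) (β : ℝ)
    (F : Finset (Fin n × Fin m) → (Fin n × Fin m → ℝ))
    (hfeas : ∀ E, GAPLPFeasible s c E (F E))
    (happrox : ∀ E, ∀ z ∈ integralAssignments s c E, GAPWelfare v z ≤ β * GAPWelfare v (F E))
    (htruth : IsTruthful v F) :
    ∃ (D : Finset (Fin n × Fin m) → Finset (Fin n × Fin m → ℝ))
      (p : Finset (Fin n × Fin m) → (Fin n × Fin m → ℝ) → ℝ),
      (∀ E x, x ∈ D E → GAPLPFeasible s c E x ∧ ∀ q, x q = 0 ∨ x q = 1) ∧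
      (∀ E x, 0 ≤ p E x) ∧
      (∀ E, ∑ x ∈ D E, p E x = 1) ∧
      (∀ (E Ei' : Finset (Fin n × Fin m)) (i : Fin n), (∀ q ∈ Ei', q.1 = i) →
        ∑ x ∈ D ((E \ E.filter (fun q => q.1 = i)) ∪ Ei'),
            p ((E \ E.filter (fun q => q.1 = i)) ∪ Ei') x *
              ∑ q ∈ E.filter (fun q => q.1 = i), v q * x q
          ≤ ∑ x ∈ D E, p E x * ∑ q ∈ E.filter (fun q => q.1 = i), v q * x q) ∧
      (∀ E z, GAPLPFeasible s c E z → (∀ q, z q = 0 ∨ z q = 1) →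
        GAPWelfare v z ≤ 2 * β * ∑ x ∈ D E, p E x * GAPWelfare v x) := by
  choose D p hD hp hp_sum hmean using fun E : Finset (Fin n × Fin m) =>
    exists_weights_of_mem_convexHull
      ((hfeas (E.filter fun q => s q ≤ c q.2)).half_smul_mem_convexHull hs
        fun q hq => (Finset.mem_filter.1 hq).2)
  have htruth' := (htruth.comp_filter (fun E => (hfeas E).2.1) fun q => s q ≤ c q.2).const_smul
    (one_half_pos (α := ℝ)).le
  refine ⟨D, p, fun E x hx => ?_, hp, hp_sum, fun E Ei' i hEi' => ?_, fun E z hz hz₀₁ => ?_⟩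
  · exact ⟨(hD E x hx).1.mono (Finset.filter_subset _ _), (hD E x hx).2⟩
  · rw [sum_mul_sum_eq_of_sum_smul_eq (hmean _), sum_mul_sum_eq_of_sum_smul_eq (hmean _)]
    exact htruth' E Ei' i hEi'
  · have hwelfare : ∑ x ∈ D E, p E x * GAPWelfare v x
        = GAPWelfare v ((1 / 2 : ℝ) • F (E.filter fun q => s q ≤ c q.2)) :=
      sum_mul_sum_eq_of_sum_smul_eq (hmean E) Finset.univ v
    have hz' := happrox _ z (mem_integralAssignments_filter hs ⟨hz, hz₀₁⟩)
    rw [hwelfare, GAPWelfare_smul]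
    linarith

/-- Reduction from truthful fractional mechanisms to truthful-in-expectation
integral mechanisms: a truthful β-approximate fractional mechanism `F` for the
GAP LP yields a truthful-in-expectation 2β-approximate randomized mechanism
over integral feasible assignments. -/
theorem stmt13 (n m : ℕ) (v s : Fin n × Fin m → ℝ) (c : Fin m → ℝ)
    (hv : ∀ p, 0 ≤ v p) (hs : ∀ p, 0 < s p) (hc : ∀ j, 0 ≤ c j)
    (β : ℝ) (hβ : 1 ≤ β)
    (F : Finset (Fin n × Fin m) → (Fin n × Fin m → ℝ))
    (hfeas : ∀ E, GAPLPFeasible s c E (F E))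
    (happrox : ∀ E y, GAPLPFeasible s c E y → GAPWelfare v y ≤ β * GAPWelfare v (F E))
    (htruth : ∀ (E Ei' : Finset (Fin n × Fin m)) (i : Fin n), (∀ q ∈ Ei', q.1 = i) →
      ∑ q ∈ E.filter (fun q => q.1 = i),
          v q * F ((E \ E.filter (fun q => q.1 = i)) ∪ Ei') q
        ≤ ∑ q ∈ E.filter (fun q => q.1 = i), v q * F E q) :
    ∃ (D : Finset (Fin n × Fin m) → Finset (Fin n × Fin m → ℝ))
      (p : Finset (Fin n × Fin m) → (Fin n × Fin m → ℝ) → ℝ),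
      (∀ E x, x ∈ D E → GAPLPFeasible s c E x ∧ ∀ q, x q = 0 ∨ x q = 1) ∧
      (∀ E x, 0 ≤ p E x) ∧
      (∀ E, ∑ x ∈ D E, p E x = 1) ∧
      (∀ (E Ei' : Finset (Fin n × Fin m)) (i : Fin n), (∀ q ∈ Ei', q.1 = i) →
        ∑ x ∈ D ((E \ E.filter (fun q => q.1 = i)) ∪ Ei'),
            p ((E \ E.filter (fun q => q.1 = i)) ∪ Ei') x *
              ∑ q ∈ E.filter (fun q => q.1 = i), v q * x q
          ≤ ∑ x ∈ D E, p E x * ∑ q ∈ E.filter (fun q => q.1 = i), v q * x q) ∧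
      (∀ E z, GAPLPFeasible s c E z → (∀ q, z q = 0 ∨ z q = 1) →
        GAPWelfare v z ≤ 2 * β * ∑ x ∈ D E, p E x * GAPWelfare v x) :=
  stmt13_general n m v s c (fun q => (hs q).le) β F hfeas (fun E z hz => happrox E z hz.1) htruth
end

section
/- Fix numbers of jobs n and machines m, values v : Fin n × Fin m → ℝ with v ≥ 0, sizes s : Fin n → ℝ with s > 0, and capacities c : Fin m → ℝ with c ≥ 0. There exists a map A from edge sets E ⊆ Fin n × Fin m to finitely supported probability distributions over assignments x : Fin n → Option (Fin m) such that: (i) every assignment in the support of A(E) is feasible for SIGAP[E]; (ii) A is truthful in expectation: for every E, every job i, and every set E'_i of pairs with first coordinate i, letting E' = (E \ E_i) ∪ E'_i, the expected value ∑_{j : (i,j) ∈ E, x(i) = some j} v(i,j) under A(E) is at least that under A(E'); and (iii) for every E, 4 · E_{x ~ A(E)}[welfare(x)] ≥ the maximum welfare of a feasible assignment for SIGAP[E]. That is, there is a 4-approximate mechanism without money for the size-invariant generalized assignment problem that is truthful-in-expectation in the private graph model. -/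
/-- Feasibility of an assignment for SIGAP[E] (machine-independent sizes). -/
def SIGAPFeasible {n m : ℕ} (s : Fin n → ℝ) (c : Fin m → ℝ)
    (E : Finset (Fin n × Fin m)) (x : Fin n → Option (Fin m)) : Prop :=
  (∀ i j, x i = some j → (i, j) ∈ E) ∧
    ∀ j, ∑ i ∈ Finset.univ.filter (fun i => x i = some j), s i ≤ c j

/-- Welfare of an assignment in SIGAP: assigned job `i` contributes `v (i,j)`. -/
def SIGAPWelfare {n m : ℕ} (v : Fin n × Fin m → ℝ) (x : Fin n → Option (Fin m)) : ℝ :=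
  ∑ i, ∑ j ∈ Finset.univ.filter (fun j => x i = some j), v (i, j)

/-!
A greedy algorithm first computes a fractional solution, which is then rounded at random so that
every pair keeps exactly half of its weight. Truthfulness and the approximation guarantee are
therefore properties of the greedy algorithm alone.

The algorithm runs once through all pairs with `s i ≤ c j` in order of decreasing density
`v (i, j) / s i`, an order that does not depend on the reported edges, and raises each edge as far
as the size of its job and the capacity of its machine allow. At every moment a truthful job has
received at least as much on its true edges as if it had misreported, and the total weight placed so
far is at least half of what any feasible solution places on the same pairs. Since the densities
decrease, summation by parts turns these inequalities between weights into inequalities between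
values.

For the rounding (Shmoys and Tardos), each machine is cut into unit slots filled with its jobs in
order of decreasing size. The result is a fractional matching of jobs and slots, hence by Birkhoff's
theorem a convex combination of matchings. In each matching the job in the first slot fits on its
machine, and so do the jobs in all other slots together; one of the two parts is kept, each with
probability 1/2.
-/

namespace SIGAP

open Finset

section Loads

variable {J M : Type*}

/-- The total weight that `y`, a weighting of the job-machine pairs, puts on the job `i`. -/
def jobLoad [Fintype M] (y : J × M → ℝ) (i : J) : ℝ := ∑ j, y (i, j)

/-- The total weight that `y`, a weighting of the job-machine pairs, puts on the machine `j`. -/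
def machineLoad [Fintype J] (y : J × M → ℝ) (j : M) : ℝ := ∑ i, y (i, j)

section
variable [Fintype M]

@[simp]
lemma jobLoad_zero : jobLoad (0 : J × M → ℝ) = 0 := by
  ext i; simp [jobLoad]

lemma jobLoad_add (y z : J × M → ℝ) : jobLoad (y + z) = jobLoad y + jobLoad z := by
  ext i; simp [jobLoad, sum_add_distrib]

lemma jobLoad_sub (y z : J × M → ℝ) : jobLoad (y - z) = jobLoad y - jobLoad z := by
  ext i; simp [jobLoad]

@[simp]
lemma jobLoad_single [DecidableEq J] [DecidableEq M] (e : J × M) (t : ℝ) :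
    jobLoad (Pi.single e t) = Pi.single e.1 t := by
  ext i
  obtain ⟨i', j'⟩ := e
  by_cases h : i = i' <;> simp [jobLoad, Pi.single_apply, h]

lemma sum_fst_eq [Fintype J] [DecidableEq J] (y : J × M → ℝ) (i : J) :
    ∑ e with e.1 = i, y e = jobLoad y i := by
  simp [sum_filter, Fintype.sum_prod_type_right, jobLoad]

lemma sum_jobLoad [Fintype J] (y : J × M → ℝ) : ∑ i, jobLoad y i = ∑ e, y e :=
  (Fintype.sum_prod_type y).symm

end

section
variable [Fintype J]

@[simp]
lemma machineLoad_zero : machineLoad (0 : J × M → ℝ) = 0 := by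
  ext j; simp [machineLoad]

lemma machineLoad_add (y z : J × M → ℝ) :
    machineLoad (y + z) = machineLoad y + machineLoad z := by
  ext j; simp [machineLoad, sum_add_distrib]

lemma machineLoad_sub (y z : J × M → ℝ) :
    machineLoad (y - z) = machineLoad y - machineLoad z := by
  ext j; simp [machineLoad]

@[simp]
lemma machineLoad_single [DecidableEq J] [DecidableEq M] (e : J × M) (t : ℝ) :
    machineLoad (Pi.single e t) = Pi.single e.2 t := by
  ext j
  obtain ⟨i', j'⟩ := e
  by_cases h : j = j' <;> simp [machineLoad, Pi.single_apply, h]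

lemma sum_machineLoad [Fintype M] (y : J × M → ℝ) : ∑ j, machineLoad y j = ∑ e, y e :=
  (Fintype.sum_prod_type_right y).symm

end

end Loads

section PiSingle

variable {ι : Type*} [DecidableEq ι]

lemma add_single_le {a p : ι → ℝ} (ha : a ≤ p) {i : ι} {t : ℝ} (ht : t ≤ p i - a i) :
    a + Pi.single i t ≤ p := by
  intro k
  rcases eq_or_ne k i with rfl | hk
  · simpa using le_sub_iff_add_le'.1 ht
  · simpa [hk] using ha k

lemma sum_comp_add_single (φ : ℝ → ℝ) {s : Finset ι} {a : ι → ℝ} {i : ι} (hi : i ∈ s) {t : ℝ} :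
    ∑ k ∈ s, φ ((a + Pi.single i t : ι → ℝ) k) = ∑ k ∈ s, φ (a k) + (φ (a i + t) - φ (a i)) := by
  have hrest : ∑ k ∈ s.erase i, φ ((a + Pi.single i t : ι → ℝ) k) = ∑ k ∈ s.erase i, φ (a k) :=
    sum_congr rfl fun k hk ↦ by simp [ne_of_mem_erase hk]
  rw [← add_sum_erase s _ hi, ← add_sum_erase s (fun k ↦ φ (a k)) hi, hrest]
  simp
  ring

end PiSingle

section SummationByParts

variable {ε : Type*} [DecidableEq ε]

-- Summation by parts: if `z` changes only at the element just read, then nonnegative partial sums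
-- survive weighting by a function that decreases along the list.
lemma mul_sum_le_sum_mul_of_pairwise {z : List ε → ε → ℝ} {F : Finset ε} {d : ε → ℝ}
    (hnil : z [] = 0) (hconcat : ∀ P e, ∃ t, z (P ++ [e]) = z P + Pi.single e t)
    (hnonneg : ∀ P, 0 ≤ ∑ e ∈ F, z P e) {L : List ε} (hL : L.Pairwise fun a b ↦ d b ≤ d a)
    {b : ℝ} (hb : ∀ e ∈ L, b ≤ d e) :
    b * ∑ e ∈ F, z L e ≤ ∑ e ∈ F, d e * z L e := by
  induction L using List.reverseRecOn generalizing b with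
  | nil => simp [hnil]
  | append_singleton P e ih =>
    rw [List.pairwise_append] at hL
    obtain ⟨t, ht⟩ := hconcat P e
    have hsum : ∑ f ∈ F, z (P ++ [e]) f = ∑ f ∈ F, z P f + if e ∈ F then t else 0 := by
      simp [ht, sum_add_distrib]
    have hweighted : ∑ f ∈ F, d f * z (P ++ [e]) f =
        ∑ f ∈ F, d f * z P f + d e * if e ∈ F then t else 0 := by
      simp [ht, mul_add, sum_add_distrib, Pi.single_apply]
    calc b * ∑ f ∈ F, z (P ++ [e]) f
        ≤ d e * ∑ f ∈ F, z (P ++ [e]) f :=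
          mul_le_mul_of_nonneg_right (hb e (by simp)) (hnonneg _)
      _ = d e * ∑ f ∈ F, z P f + d e * if e ∈ F then t else 0 := by rw [hsum, mul_add]
      _ ≤ ∑ f ∈ F, d f * z P f + d e * if e ∈ F then t else 0 := by
          gcongr
          exact ih hL.1 fun f hf ↦ hL.2.2 f hf e (by simp)
      _ = ∑ f ∈ F, d f * z (P ++ [e]) f := hweighted.symm

end SummationByParts

section Greedy

variable {J M : Type*} [Fintype J] [Fintype M] [DecidableEq J] [DecidableEq M]

/-- The amount by which the greedy algorithm raises the weight of `e` when its current solution is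
`y`: all that the budgets `p` of the jobs and `q` of the machines allow if `e` is an edge, and
nothing otherwise. -/
noncomputable def greedyIncrement (E : Finset (J × M)) (p : J → ℝ) (q : M → ℝ)
    (y : J × M → ℝ) (e : J × M) : ℝ :=
  if e ∈ E then min (p e.1 - jobLoad y e.1) (q e.2 - machineLoad y e.2) else 0

/-- The fractional solution of the greedy algorithm on the edge set `E`, with budget `p i` for the
job `i` and `q j` for the machine `j`, when it runs through the pairs in the order of the list.
Pairs outside `E` are skipped rather than absent from the list, so that runs on different edge
sets stay synchronized. -/
noncomputable def greedy (E : Finset (J × M)) (p : J → ℝ) (q : M → ℝ) (L : List (J × M)) :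
    J × M → ℝ :=
  L.foldl (fun y e ↦ y + Pi.single e (greedyIncrement E p q y e)) 0

variable {E E' : Finset (J × M)} {p : J → ℝ} {q : M → ℝ}

@[simp]
lemma greedy_nil : greedy E p q [] = 0 := rfl

lemma greedy_concat (L : List (J × M)) (e : J × M) :
    greedy E p q (L ++ [e]) =
      greedy E p q L + Pi.single e (greedyIncrement E p q (greedy E p q L) e) := by
  simp [greedy]

lemma jobLoad_greedy_concat (L : List (J × M)) (e : J × M) :
    jobLoad (greedy E p q (L ++ [e])) = jobLoad (greedy E p q L) +
      Pi.single e.1 (greedyIncrement E p q (greedy E p q L) e) := by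
  rw [greedy_concat, jobLoad_add, jobLoad_single]

lemma machineLoad_greedy_concat (L : List (J × M)) (e : J × M) :
    machineLoad (greedy E p q (L ++ [e])) = machineLoad (greedy E p q L) +
      Pi.single e.2 (greedyIncrement E p q (greedy E p q L) e) := by
  rw [greedy_concat, machineLoad_add, machineLoad_single]

lemma greedyIncrement_le_job {y : J × M → ℝ} (hy : jobLoad y ≤ p) (e : J × M) :
    greedyIncrement E p q y e ≤ p e.1 - jobLoad y e.1 := by
  unfold greedyIncrement
  split_ifs
  · exact min_le_left _ _
  · exact sub_nonneg.2 (hy e.1)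

lemma greedyIncrement_le_machine {y : J × M → ℝ} (hy : machineLoad y ≤ q) (e : J × M) :
    greedyIncrement E p q y e ≤ q e.2 - machineLoad y e.2 := by
  unfold greedyIncrement
  split_ifs
  · exact min_le_right _ _
  · exact sub_nonneg.2 (hy e.2)

lemma jobLoad_greedy_le (hp : 0 ≤ p) (L : List (J × M)) : jobLoad (greedy E p q L) ≤ p := by
  induction L using List.reverseRecOn with
  | nil => simpa using hp
  | append_singleton L e ih =>
    rw [jobLoad_greedy_concat]
    exact add_single_le ih (greedyIncrement_le_job ih e)

lemma machineLoad_greedy_le (hq : 0 ≤ q) (L : List (J × M)) :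
    machineLoad (greedy E p q L) ≤ q := by
  induction L using List.reverseRecOn with
  | nil => simpa using hq
  | append_singleton L e ih =>
    rw [machineLoad_greedy_concat]
    exact add_single_le ih (greedyIncrement_le_machine ih e)

lemma greedyIncrement_greedy_nonneg (hp : 0 ≤ p) (hq : 0 ≤ q) (L : List (J × M)) (e : J × M) :
    0 ≤ greedyIncrement E p q (greedy E p q L) e := by
  unfold greedyIncrement
  split_ifs
  · exact le_min (sub_nonneg.2 (jobLoad_greedy_le hp L e.1))
      (sub_nonneg.2 (machineLoad_greedy_le hq L e.2))
  · exact le_rfl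

lemma jobLoad_greedy_le_concat (hp : 0 ≤ p) (hq : 0 ≤ q) (L : List (J × M)) (e : J × M) :
    jobLoad (greedy E p q L) ≤ jobLoad (greedy E p q (L ++ [e])) := by
  rw [jobLoad_greedy_concat]
  exact le_add_of_nonneg_right (Pi.single_nonneg.2 (greedyIncrement_greedy_nonneg hp hq L e))

lemma machineLoad_greedy_le_concat (hp : 0 ≤ p) (hq : 0 ≤ q) (L : List (J × M)) (e : J × M) :
    machineLoad (greedy E p q L) ≤ machineLoad (greedy E p q (L ++ [e])) := by
  rw [machineLoad_greedy_concat]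
  exact le_add_of_nonneg_right (Pi.single_nonneg.2 (greedyIncrement_greedy_nonneg hp hq L e))

lemma greedy_nonneg (hp : 0 ≤ p) (hq : 0 ≤ q) (L : List (J × M)) : 0 ≤ greedy E p q L := by
  induction L using List.reverseRecOn with
  | nil => simp
  | append_singleton L e ih =>
    rw [greedy_concat]
    exact add_nonneg ih (Pi.single_nonneg.2 (greedyIncrement_greedy_nonneg hp hq L e))

lemma mem_of_greedy_ne_zero {L : List (J × M)} {e : J × M} (h : greedy E p q L e ≠ 0) :
    e ∈ E ∧ e ∈ L := by
  induction L using List.reverseRecOn with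
  | nil => simp at h
  | append_singleton L f ih =>
    rcases eq_or_ne (greedy E p q L e) 0 with h0 | h0
    · rw [greedy_concat, Pi.add_apply, h0, zero_add] at h
      obtain rfl : e = f := by
        by_contra hne
        exact h (Pi.single_eq_of_ne hne _)
      refine ⟨?_, by simp⟩
      by_contra hE
      simp [greedyIncrement, hE] at h
    · exact ⟨(ih h0).1, List.mem_append_left _ (ih h0).2⟩

lemma greedy_saturates (hp : 0 ≤ p) (hq : 0 ≤ q) {L : List (J × M)} {e : J × M} (heE : e ∈ E)
    (heL : e ∈ L) :
    p e.1 ≤ jobLoad (greedy E p q L) e.1 ∨ q e.2 ≤ machineLoad (greedy E p q L) e.2 := by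
  induction L using List.reverseRecOn with
  | nil => simp at heL
  | append_singleton L f ih =>
    rcases List.mem_append.1 heL with heL | hef
    · exact (ih heL).imp (fun h ↦ h.trans (jobLoad_greedy_le_concat hp hq L f e.1))
        (fun h ↦ h.trans (machineLoad_greedy_le_concat hp hq L f e.2))
    · obtain rfl : e = f := by simpa using hef
      rw [jobLoad_greedy_concat, machineLoad_greedy_concat]
      simp only [Pi.add_apply, Pi.single_eq_same, greedyIncrement, heE, if_true]
      rcases min_choice (p e.1 - jobLoad (greedy E p q L) e.1)
        (q e.2 - machineLoad (greedy E p q L) e.2) with h | h <;> rw [h] <;> simp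

end Greedy

section Approximation

variable {J M : Type*} [Fintype J] [Fintype M]

lemma sum_ite_job_le_sum {y z : J × M → ℝ} {p : J → ℝ} (hy : 0 ≤ y) (hz : jobLoad z ≤ p) :
    ∑ e : J × M, (if p e.1 ≤ jobLoad y e.1 then z e else 0) ≤ ∑ e, y e := by
  rw [Fintype.sum_prod_type, ← sum_jobLoad]
  refine sum_le_sum fun i _ ↦ ?_
  by_cases hsat : p i ≤ jobLoad y i
  · simp only [hsat, if_true]
    exact (hz i).trans hsat
  · simp only [hsat, if_false, sum_const_zero]
    exact sum_nonneg fun j _ ↦ hy (i, j)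

lemma sum_ite_machine_le_sum {y z : J × M → ℝ} {q : M → ℝ} (hy : 0 ≤ y)
    (hz : machineLoad z ≤ q) :
    ∑ e : J × M, (if q e.2 ≤ machineLoad y e.2 then z e else 0) ≤ ∑ e, y e := by
  rw [Fintype.sum_prod_type_right, ← sum_machineLoad]
  refine sum_le_sum fun j _ ↦ ?_
  by_cases hsat : q j ≤ machineLoad y j
  · simp only [hsat, if_true]
    exact (hz j).trans hsat
  · simp only [hsat, if_false, sum_const_zero]
    exact sum_nonneg fun i _ ↦ hy (i, j)

variable [DecidableEq J] [DecidableEq M] {E : Finset (J × M)} {p : J → ℝ} {q : M → ℝ}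

-- The jobs and machines whose budget is exhausted form a vertex cover of the edges read so far.
lemma sum_ite_mem_le_two_mul_sum_greedy {z : J × M → ℝ} (hz : 0 ≤ z) (hzp : jobLoad z ≤ p)
    (hzq : machineLoad z ≤ q) (hzE : ∀ e, z e ≠ 0 → e ∈ E) (L : List (J × M)) :
    ∑ e, (if e ∈ L then z e else 0) ≤ 2 * ∑ e, greedy E p q L e := by
  have hp : 0 ≤ p := fun i ↦ (sum_nonneg fun j _ ↦ hz (i, j)).trans (hzp i)
  have hq : 0 ≤ q := fun j ↦ (sum_nonneg fun i _ ↦ hz (i, j)).trans (hzq j)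
  set y := greedy E p q L
  calc ∑ e, (if e ∈ L then z e else 0)
      ≤ ∑ e : J × M, ((if p e.1 ≤ jobLoad y e.1 then z e else 0) +
          if q e.2 ≤ machineLoad y e.2 then z e else 0) := by
        refine sum_le_sum fun e _ ↦ ?_
        have hcover : e ∈ L → z e ≠ 0 → p e.1 ≤ jobLoad y e.1 ∨ q e.2 ≤ machineLoad y e.2 :=
          fun heL hze ↦ greedy_saturates hp hq (hzE e hze) heL
        have hze : 0 ≤ z e := hz e
        grind
    _ ≤ ∑ e, y e + ∑ e, y e := by
        rw [sum_add_distrib]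
        exact add_le_add (sum_ite_job_le_sum (greedy_nonneg hp hq L) hzp)
          (sum_ite_machine_le_sum (greedy_nonneg hp hq L) hzq)
    _ = 2 * ∑ e, y e := (two_mul _).symm

theorem sum_mul_le_two_mul_sum_mul_greedy {z d : J × M → ℝ} (hz : 0 ≤ z) (hzp : jobLoad z ≤ p)
    (hzq : machineLoad z ≤ q) {L : List (J × M)} (hL : L.Pairwise fun a b ↦ d b ≤ d a)
    (hd : ∀ e ∈ L, 0 ≤ d e) (hzE : ∀ e, z e ≠ 0 → e ∈ E) (hzL : ∀ e, z e ≠ 0 → e ∈ L) :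
    ∑ e, d e * z e ≤ 2 * ∑ e, d e * greedy E p q L e := by
  have habel := mul_sum_le_sum_mul_of_pairwise (F := univ)
    (z := fun P ↦ (2 : ℝ) • greedy E p q P - fun e ↦ if e ∈ P then z e else 0)
    (by ext; simp) (fun P e ↦ ?_) (fun P ↦ ?_) hL hd
  · have hrestrict : ∀ e, (if e ∈ L then z e else 0) = z e := fun e ↦
      ite_eq_left_iff.2 fun he ↦ (not_imp_comm.1 (hzL e) he).symm
    simp only [Pi.sub_apply, Pi.smul_apply, smul_eq_mul, hrestrict, mul_sub, sum_sub_distrib,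
      mul_left_comm (d _) 2, ← mul_sum] at habel
    linarith
  · refine ⟨2 * greedyIncrement E p q (greedy E p q P) e - if e ∈ P then 0 else z e, ?_⟩
    ext f
    by_cases hf : f = e <;> by_cases hP : e ∈ P <;>
      simp [greedy_concat, hf, hP] <;> ring
  · simpa [sum_sub_distrib, ← mul_sum] using sum_ite_mem_le_two_mul_sum_greedy hz hzp hzq hzE P

end Approximation

section Truthfulness

variable {J M : Type*} [Fintype J] [Fintype M] [DecidableEq J]

/-- A potential for the difference `z` between a truthful run of the greedy algorithm and a run in
which the job `i` misreports its edges: the machine capacity that only the truthful run has used,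
plus the weight that the other jobs have lost in it. Until the job `i` is saturated, it stays below
the weight that `i` has gained from being truthful. -/
noncomputable def disruption (i : J) (z : J × M → ℝ) : ℝ :=
  ∑ j, (machineLoad z j)⁺ + ∑ k ∈ univ.erase i, (jobLoad z k)⁻

lemma disruption_nonneg (i : J) (z : J × M → ℝ) : 0 ≤ disruption i z :=
  add_nonneg (sum_nonneg fun _ _ ↦ posPart_nonneg _) (sum_nonneg fun _ _ ↦ negPart_nonneg _)

variable [DecidableEq M]

lemma disruption_add_single_self (z : J × M → ℝ) (e : J × M) (t : ℝ) :
    disruption e.1 (z + Pi.single e t) =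
      disruption e.1 z + ((machineLoad z e.2 + t)⁺ - (machineLoad z e.2)⁺) := by
  have hjobs : ∑ k ∈ univ.erase e.1, (jobLoad (z + Pi.single e t) k)⁻ =
      ∑ k ∈ univ.erase e.1, (jobLoad z k)⁻ :=
    sum_congr rfl fun k hk ↦ by simp [jobLoad_add, ne_of_mem_erase hk]
  rw [disruption, disruption, hjobs, machineLoad_add, machineLoad_single,
    sum_comp_add_single (·⁺) (mem_univ _)]
  ring

lemma disruption_add_single_of_ne {i : J} (z : J × M → ℝ) {e : J × M} (he : e.1 ≠ i) (t : ℝ) :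
    disruption i (z + Pi.single e t) =
      disruption i z + ((machineLoad z e.2 + t)⁺ - (machineLoad z e.2)⁺) +
        ((jobLoad z e.1 + t)⁻ - (jobLoad z e.1)⁻) := by
  rw [disruption, disruption, machineLoad_add, machineLoad_single, jobLoad_add, jobLoad_single,
    sum_comp_add_single (·⁺) (mem_univ _),
    sum_comp_add_single (·⁻) (mem_erase.2 ⟨he, mem_univ _⟩)]
  ring

lemma posPart_add_negPart_exchange (a b a' b' : ℝ) :
    (b' - b + (min a b - min a' b'))⁺ + (a' - a + (min a b - min a' b'))⁻ ≤
      (b' - b)⁺ + (a' - a)⁻ := by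
  simp only [posPart_def, negPart_def]
  grind

variable {E E' : Finset (J × M)} {p : J → ℝ} {q : M → ℝ} {i : J}

lemma greedy_sub_greedy_concat (L : List (J × M)) (e : J × M) :
    greedy E p q (L ++ [e]) - greedy E' p q (L ++ [e]) = greedy E p q L - greedy E' p q L +
      Pi.single e (greedyIncrement E p q (greedy E p q L) e -
        greedyIncrement E' p q (greedy E' p q L) e) := by
  rw [greedy_concat, greedy_concat, Pi.single_sub, add_sub_add_comm]

lemma disruption_greedy_concat_le_of_mem_iff {e : J × M} (he : e.1 ≠ i) (hE : e ∈ E ↔ e ∈ E')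
    (L : List (J × M)) :
    disruption i (greedy E p q (L ++ [e]) - greedy E' p q (L ++ [e])) ≤
      disruption i (greedy E p q L - greedy E' p q L) := by
  rw [greedy_sub_greedy_concat, disruption_add_single_of_ne _ he, jobLoad_sub, machineLoad_sub]
  by_cases heE : e ∈ E
  · have hexchange := posPart_add_negPart_exchange
      (p e.1 - jobLoad (greedy E p q L) e.1) (q e.2 - machineLoad (greedy E p q L) e.2)
      (p e.1 - jobLoad (greedy E' p q L) e.1) (q e.2 - machineLoad (greedy E' p q L) e.2)
    simp only [sub_sub_sub_cancel_left] at hexchange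
    simp only [greedyIncrement, heE, hE.1 heE, if_true, Pi.sub_apply]
    linarith
  · simp [greedyIncrement, heE, mt hE.2 heE]

lemma disruption_greedy_concat_le_of_notMem (hp : 0 ≤ p) (hq : 0 ≤ q) {e : J × M} (heE : e ∉ E)
    (L : List (J × M)) :
    disruption e.1 (greedy E p q (L ++ [e]) - greedy E' p q (L ++ [e])) ≤
      disruption e.1 (greedy E p q L - greedy E' p q L) := by
  rw [greedy_sub_greedy_concat, disruption_add_single_self]
  have hinc : greedyIncrement E p q (greedy E p q L) e = 0 := if_neg heE
  have hinc' := greedyIncrement_greedy_nonneg (E := E') hp hq L e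
  have hmono := posPart_mono (show machineLoad (greedy E p q L - greedy E' p q L) e.2 +
    (greedyIncrement E p q (greedy E p q L) e - greedyIncrement E' p q (greedy E' p q L) e) ≤
      machineLoad (greedy E p q L - greedy E' p q L) e.2 by linarith)
  linarith

-- If `e` does not exhaust its job, it fills its machine in the truthful run, so that after this
-- step the positive part for the machine equals the (nonnegative) load difference.
lemma disruption_greedy_concat_le_of_mem (hq : 0 ≤ q) {e : J × M} (heE : e ∈ E) (L : List (J × M))
    (hlt : jobLoad (greedy E p q (L ++ [e])) e.1 < p e.1) :
    disruption e.1 (greedy E p q (L ++ [e]) - greedy E' p q (L ++ [e])) ≤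
      disruption e.1 (greedy E p q L - greedy E' p q L) +
        (greedyIncrement E p q (greedy E p q L) e -
          greedyIncrement E' p q (greedy E' p q L) e) := by
  have hinc : greedyIncrement E p q (greedy E p q L) e =
      q e.2 - machineLoad (greedy E p q L) e.2 := by
    rw [jobLoad_greedy_concat, Pi.add_apply, Pi.single_eq_same] at hlt
    rw [greedyIncrement, if_pos heE] at hlt ⊢
    refine min_eq_right (le_of_not_ge fun h ↦ ?_)
    rw [min_eq_left h] at hlt
    linarith
  have hinc' := greedyIncrement_le_machine (E := E') (p := p)
    (machineLoad_greedy_le (E := E') (p := p) hq L) e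
  rw [greedy_sub_greedy_concat, disruption_add_single_self, machineLoad_sub, Pi.sub_apply,
    posPart_of_nonneg (a := _ + _) (by linarith)]
  linarith [le_posPart (machineLoad (greedy E p q L) e.2 - machineLoad (greedy E' p q L) e.2)]

lemma disruption_greedy_le_or_saturated (hp : 0 ≤ p) (hq : 0 ≤ q)
    (hE : ∀ e : J × M, e.1 ≠ i → (e ∈ E ↔ e ∈ E')) (L : List (J × M)) :
    disruption i (greedy E p q L - greedy E' p q L) ≤
        ∑ e ∈ E with e.1 = i, (greedy E p q L - greedy E' p q L) e ∨
      p i ≤ jobLoad (greedy E p q L) i := by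
  induction L using List.reverseRecOn with
  | nil => left; simp [disruption]
  | append_singleton L e ih =>
    rw [or_iff_not_imp_right, not_le]
    intro hlt
    have hdisruption := ih.resolve_right
      ((jobLoad_greedy_le_concat hp hq L e i).trans_lt hlt).not_ge
    rw [greedy_sub_greedy_concat]
    simp only [Pi.add_apply (greedy E p q L - greedy E' p q L), sum_add_distrib, sum_pi_single',
      mem_filter]
    rw [← greedy_sub_greedy_concat]
    by_cases he : e.1 = i
    · subst he
      by_cases heE : e ∈ E
      · simpa [heE] using (disruption_greedy_concat_le_of_mem hq heE L hlt).trans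
          (add_le_add_left hdisruption _)
      · simpa [heE] using (disruption_greedy_concat_le_of_notMem hp hq heE L).trans hdisruption
    · simpa [he] using (disruption_greedy_concat_le_of_mem_iff he (hE e he) L).trans hdisruption

lemma sum_greedy_sub_greedy_nonneg (hp : 0 ≤ p) (hq : 0 ≤ q)
    (hE : ∀ e : J × M, e.1 ≠ i → (e ∈ E ↔ e ∈ E')) (L : List (J × M)) :
    0 ≤ ∑ e ∈ E with e.1 = i, (greedy E p q L - greedy E' p q L) e := by
  rcases disruption_greedy_le_or_saturated hp hq hE L with hdisruption | hsat
  · exact (disruption_nonneg _ _).trans hdisruption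
  · rw [← sum_fst_eq] at hsat
    simp only [Pi.sub_apply, sum_sub_distrib, sub_nonneg]
    calc ∑ e ∈ E with e.1 = i, greedy E' p q L e
        ≤ ∑ e with e.1 = i, greedy E' p q L e :=
          sum_le_sum_of_subset_of_nonneg (filter_subset_filter _ (subset_univ E))
            fun e _ _ ↦ greedy_nonneg hp hq L e
      _ ≤ p i := (sum_fst_eq _ i).trans_le (jobLoad_greedy_le hp L i)
      _ ≤ ∑ e with e.1 = i, greedy E p q L e := hsat
      _ = ∑ e ∈ E with e.1 = i, greedy E p q L e := by
          refine (sum_subset (filter_subset_filter _ (subset_univ E)) fun e hei he ↦ ?_).symm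
          by_contra hne
          exact he (mem_filter.2 ⟨(mem_of_greedy_ne_zero hne).1, (mem_filter.1 hei).2⟩)

theorem sum_mul_greedy_le_of_mem_iff (hp : 0 ≤ p) (hq : 0 ≤ q)
    (hE : ∀ e : J × M, e.1 ≠ i → (e ∈ E ↔ e ∈ E')) {d : J × M → ℝ} {L : List (J × M)}
    (hL : L.Pairwise fun a b ↦ d b ≤ d a) (hd : ∀ e ∈ L, 0 ≤ d e) :
    ∑ e ∈ E with e.1 = i, d e * greedy E' p q L e ≤
      ∑ e ∈ E with e.1 = i, d e * greedy E p q L e := by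
  have habel := mul_sum_le_sum_mul_of_pairwise (z := fun P ↦ greedy E p q P - greedy E' p q P)
    (sub_self 0) (fun P e ↦ ⟨_, greedy_sub_greedy_concat P e⟩)
    (sum_greedy_sub_greedy_nonneg hp hq hE) hL hd
  simpa [mul_sub] using habel

end Truthfulness

section Slots

/-- The load of the slot `k` after loads of total weight `t` have been poured into unit slots
numbered `0, 1, 2, …` in this order: the length of `[0, t] ∩ [k, k + 1]`. -/
noncomputable def slotFill (k : ℕ) (t : ℝ) : ℝ := min (max (t - k) 0) 1

lemma slotFill_nonneg (k : ℕ) (t : ℝ) : 0 ≤ slotFill k t :=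
  le_min (le_max_right _ _) zero_le_one

lemma slotFill_le_one (k : ℕ) (t : ℝ) : slotFill k t ≤ 1 := min_le_right _ _

lemma slotFill_mono (k : ℕ) : Monotone (slotFill k) := fun a b hab ↦ by
  unfold slotFill
  gcongr

lemma sum_slotFill (N : ℕ) {t : ℝ} (ht : 0 ≤ t) : ∑ k : Fin N, slotFill k t = min t N := by
  induction N with
  | zero => simp [ht]
  | succ N ih =>
    rw [Fin.sum_univ_castSucc, Fin.val_last]
    simp only [Fin.val_castSucc, ih]
    rw [slotFill]
    push_cast
    grind

lemma sum_slotFill_sub_slotFill {N : ℕ} {t u : ℝ} (ht : 0 ≤ t) (hu : 0 ≤ u) (hN : u + t ≤ N) :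
    ∑ k : Fin N, (slotFill k (u + t) - slotFill k t) = u := by
  rw [sum_sub_distrib, sum_slotFill N ht, sum_slotFill N (add_nonneg hu ht), min_eq_left hN,
    min_eq_left (by linarith), add_sub_cancel_right]

lemma slotFill_eq_one_of_succ_pos {k : ℕ} {t : ℝ} (h : 0 < slotFill (k + 1) t) :
    slotFill k t = 1 := by
  unfold slotFill at *
  push_cast at h
  grind

variable {J : Type*}

/-- `Y` is the outcome of pouring the weights `y` of the jobs in `S` into unit slots, in order of
decreasing size `s`: each job in a slot `k + 1` is no larger than the average job in the slot `k`.
One slot more than needed is kept for convenience of indexing. -/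
structure IsSlotting {N : ℕ} (S : Finset J) (s y : J → ℝ) (Y : J → Fin (N + 1) → ℝ) : Prop where
  nonneg : ∀ i k, 0 ≤ Y i k
  sum_slots : ∀ i ∈ S, ∑ k, Y i k = y i
  sum_jobs : ∀ k, ∑ i ∈ S, Y i k = slotFill k (∑ i ∈ S, y i)
  size_le : ∀ i ∈ S, ∀ k : Fin N, 0 < Y i k.succ → s i ≤ ∑ i' ∈ S, Y i' k.castSucc * s i'

lemma le_sum_mul_of_sum_eq_one {S : Finset J} {w s : J → ℝ} {b : ℝ} (hw : ∀ i ∈ S, 0 ≤ w i)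
    (hsum : ∑ i ∈ S, w i = 1) (hb : ∀ i ∈ S, b ≤ s i) : b ≤ ∑ i ∈ S, w i * s i := by
  calc b = ∑ i ∈ S, w i * b := by rw [← sum_mul, hsum, one_mul]
    _ ≤ ∑ i ∈ S, w i * s i := sum_le_sum fun i hi ↦ mul_le_mul_of_nonneg_left (hb i hi) (hw i hi)

lemma IsSlotting.exists_insert [DecidableEq J] {N : ℕ} {S : Finset J} {s y : J → ℝ}
    {Y : J → Fin (N + 1) → ℝ} (hY : IsSlotting S s y Y) {a : J} (ha : a ∉ S) (hs : 0 ≤ s a)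
    (hmin : ∀ i ∈ S, s a ≤ s i) (hy : 0 ≤ y) (hN : ∑ i ∈ insert a S, y i ≤ N) :
    ∃ Y' : J → Fin (N + 1) → ℝ, IsSlotting (insert a S) s y Y' := by
  set t := ∑ i ∈ S, y i with ht
  have ht0 : 0 ≤ t := sum_nonneg fun i _ ↦ hy i
  have hya : 0 ≤ y a := hy a
  rw [sum_insert ha] at hN
  set Y' := Function.update Y a fun k ↦ slotFill k (y a + t) - slotFill k t with hY'
  have hYa : ∀ k, Y' a k = slotFill k (y a + t) - slotFill k t := by simp [hY']
  have hYS : ∀ i ∈ S, Y' i = Y i := fun i hi ↦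
    Function.update_of_ne (ne_of_mem_of_not_mem hi ha) _ _
  have hnonneg : ∀ i k, 0 ≤ Y' i k := by
    intro i k
    rcases eq_or_ne i a with rfl | hia
    · rw [hYa]
      exact sub_nonneg.2 (slotFill_mono k (by linarith))
    · simpa [hY', hia] using hY.nonneg i k
  have hjobs : ∀ k, ∑ i ∈ insert a S, Y' i k = slotFill k (y a + t) := by
    intro k
    rw [sum_insert ha, hYa, sum_congr rfl fun i hi ↦ congrFun (hYS i hi) k, hY.sum_jobs,
      sub_add_cancel]
  refine ⟨Y', hnonneg, ?_, by simpa only [sum_insert ha] using hjobs, ?_⟩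
  · intro i hi
    rcases mem_insert.1 hi with rfl | hi
    · simp only [hYa]
      exact sum_slotFill_sub_slotFill ht0 hya (by push_cast; linarith)
    · rw [hYS i hi, hY.sum_slots i hi]
  · intro i hi k hk
    rcases mem_insert.1 hi with rfl | hi
    · have hfull : slotFill k (y i + t) = 1 := by
        refine slotFill_eq_one_of_succ_pos ?_
        rw [hYa, Fin.val_succ] at hk
        linarith [slotFill_nonneg (k + 1) t]
      exact le_sum_mul_of_sum_eq_one (fun i' _ ↦ hnonneg i' _) ((hjobs _).trans hfull)
        (forall_mem_insert _ _ _ |>.2 ⟨le_rfl, hmin⟩)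
    · rw [hYS i hi] at hk
      rw [sum_insert ha, sum_congr rfl fun i' hi' ↦ by rw [hYS i' hi']]
      exact (hY.size_le i hi k hk).trans (le_add_of_nonneg_left (mul_nonneg (hnonneg a _) hs))

lemma exists_isSlotting {N : ℕ} {s y : J → ℝ} (hs : 0 ≤ s) (hy : 0 ≤ y) (S : Finset J)
    (hN : ∑ i ∈ S, y i ≤ N) : ∃ Y : J → Fin (N + 1) → ℝ, IsSlotting S s y Y := by
  classical
  induction S using Finset.induction_on_max_value (fun i ↦ -s i) with
  | empty => exact ⟨0, by simp, by simp, by simp [slotFill], by simp⟩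
  | insert a S ha hmin ih =>
    have hle : ∑ i ∈ S, y i ≤ ∑ i ∈ insert a S, y i :=
      sum_le_sum_of_subset_of_nonneg (subset_insert a S) fun i _ _ ↦ hy i
    obtain ⟨Y, hY⟩ := ih (hle.trans hN)
    exact hY.exists_insert ha (hs a) (fun i hi ↦ neg_le_neg_iff.1 (hmin i hi)) hy hN

lemma IsSlotting.pos {N : ℕ} {S : Finset J} {s y : J → ℝ} {Y : J → Fin (N + 1) → ℝ}
    (hY : IsSlotting S s y Y) {i : J} (hi : i ∈ S) {k : Fin (N + 1)} (hk : 0 < Y i k) :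
    0 < y i := by
  rw [← hY.sum_slots i hi]
  exact sum_pos' (fun k _ ↦ hY.nonneg i k) ⟨k, mem_univ k, hk⟩

lemma IsSlotting.sum_castSucc_le {N : ℕ} {S : Finset J} {s y : J → ℝ} {Y : J → Fin (N + 1) → ℝ}
    (hY : IsSlotting S s y Y) (hs : 0 ≤ s) :
    ∑ k : Fin N, ∑ i ∈ S, Y i k.castSucc * s i ≤ ∑ i ∈ S, y i * s i := by
  calc ∑ k : Fin N, ∑ i ∈ S, Y i k.castSucc * s i
      ≤ ∑ k, ∑ i ∈ S, Y i k * s i := by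
        rw [Fin.sum_univ_castSucc]
        exact le_add_of_nonneg_right (sum_nonneg fun i _ ↦ mul_nonneg (hY.nonneg i _) (hs i))
    _ = ∑ i ∈ S, y i * s i := by
        rw [sum_comm]
        exact sum_congr rfl fun i hi ↦ by rw [← sum_mul, hY.sum_slots i hi]

end Slots

section Matching

/-- The incidence matrix of a partial map. -/
def incidence {J S : Type*} [DecidableEq S] (τ : J → Option S) (e : J × S) : ℝ :=
  if τ e.1 = some e.2 then 1 else 0

variable {J S : Type*} [DecidableEq S]

lemma sum_incidence_mul [Fintype J] (τ : J → Option S) (k : S) (f : J → ℝ) :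
    ∑ i, incidence τ (i, k) * f i = ∑ i with τ i = some k, f i := by
  simp [incidence, sum_filter]

lemma jobLoad_incidence_le [Fintype S] (τ : J → Option S) : jobLoad (incidence τ) ≤ 1 := by
  intro i
  rcases h : τ i with _ | k <;> simp [jobLoad, incidence, h]

lemma sum_filter_eq_some_le [Fintype J] {τ : J → Option S} {k : S} {f : J → ℝ} {b : ℝ}
    (hτ : ∀ i i', τ i = some k → τ i' = some k → i = i') (hb : 0 ≤ b)
    (hf : ∀ i, τ i = some k → f i ≤ b) : ∑ i with τ i = some k, f i ≤ b := by
  by_cases hex : ∃ i, τ i = some k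
  · obtain ⟨i, hi⟩ := hex
    have : univ.filter (fun i' ↦ τ i' = some k) = {i} := by
      ext i'
      simpa using ⟨fun h ↦ hτ _ _ h hi, fun h ↦ h ▸ hi⟩
    simpa [this] using hf i hi
  · simpa [filter_false_of_mem fun i _ h ↦ hex ⟨i, h⟩] using hb

variable [Fintype J] [Fintype S]

-- A fractional matching is a block of the doubly stochastic matrix with blocks `Z` and `Zᵀ` off
-- the diagonal and the slacks on it.
lemma exists_doublyStochastic_extending [DecidableEq J] {Z : J × S → ℝ} (hZ : 0 ≤ Z)
    (hJ : jobLoad Z ≤ 1) (hS : machineLoad Z ≤ 1) :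
    ∃ B ∈ doublyStochastic ℝ (J ⊕ S), ∀ i k, B (.inl i) (.inr k) = Z (i, k) := by
  refine ⟨Matrix.fromBlocks (.diagonal (1 - jobLoad Z)) (.of fun i k ↦ Z (i, k))
    (.of fun k i ↦ Z (i, k)) (.diagonal (1 - machineLoad Z)), ?_, fun i k ↦ rfl⟩
  rw [mem_doublyStochastic_iff_sum]
  refine ⟨?_, ?_, ?_⟩
  · rintro (i | k) (i' | k')
    · rw [Matrix.fromBlocks_apply₁₁, Matrix.diagonal_apply]
      split_ifs
      exacts [sub_nonneg.2 (hJ i), le_rfl]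
    · exact hZ _
    · exact hZ _
    · rw [Matrix.fromBlocks_apply₂₂, Matrix.diagonal_apply]
      split_ifs
      exacts [sub_nonneg.2 (hS k), le_rfl]
  · rintro (i | k) <;> simp [Matrix.diagonal_apply, jobLoad, machineLoad]
  · rintro (i | k) <;> simp [Matrix.diagonal_apply, jobLoad, machineLoad]

theorem mem_convexHull_matchings {Z : J × S → ℝ} (hZ : 0 ≤ Z) (hJ : jobLoad Z ≤ 1)
    (hS : machineLoad Z ≤ 1) :
    Z ∈ convexHull ℝ (incidence '' {τ : J → Option S |
      (∀ i i' k, τ i = some k → τ i' = some k → i = i') ∧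
        ∀ i k, τ i = some k → 0 < Z (i, k)}) := by
  classical
  obtain ⟨B, hB, hBZ⟩ := exists_doublyStochastic_extending hZ hJ hS
  obtain ⟨w, hw0, hw1, rfl⟩ := exists_eq_sum_perm_of_mem_doublyStochastic hB
  let τ (σ : Equiv.Perm (J ⊕ S)) (i : J) : Option S := (σ (.inl i)).getRight?
  have hZτ : Z = ∑ σ, w σ • incidence (τ σ) := by
    ext ⟨i, k⟩
    rw [← hBZ, Matrix.sum_apply, Finset.sum_apply]
    simp [τ, incidence, PEquiv.toMatrix_apply]
  have hpos : ∀ σ, w σ ≠ 0 → ∀ i k, τ σ i = some k → 0 < Z (i, k) := by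
    intro σ hσ i k h
    rw [hZτ, Finset.sum_apply]
    refine sum_pos' (fun σ' _ ↦ mul_nonneg (hw0 σ') ?_) ⟨σ, mem_univ σ, ?_⟩
    · unfold incidence
      positivity
    · simpa [incidence, h] using (hw0 σ).lt_of_ne' hσ
  have hinj : ∀ σ i i' k, τ σ i = some k → τ σ i' = some k → i = i' := by
    intro σ i i' k h h'
    rw [Sum.getRight?_eq_some_iff] at h h'
    exact Sum.inl_injective (σ.injective (h.trans h'.symm))
  have hfilter : ∑ σ with w σ ≠ 0, w σ • incidence (τ σ) = Z := by
    rw [hZτ]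
    exact sum_filter_of_ne fun σ _ h hσ ↦ h (by simp [hσ])
  rw [← hfilter]
  refine (convex_convexHull ℝ _).sum_mem (fun σ _ ↦ hw0 σ)
    ((sum_filter_of_ne fun σ _ h ↦ h).trans hw1) fun σ hσ ↦ subset_convexHull ℝ _ ?_
  rw [hfilter]
  exact ⟨τ σ, ⟨hinj σ, hpos σ (mem_filter.1 hσ).2⟩, rfl⟩

end Matching

section Rounding

variable {J M κ : Type*} [DecidableEq κ]

/-- The assignment that gives a job to a machine if `τ` places it in one of the slots `B` of that
machine, where a pair in `M × κ` stands for a slot of a machine. -/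
def keepSlots (B : Finset κ) (τ : J → Option (M × κ)) (i : J) : Option M :=
  ((τ i).filter fun t ↦ t.2 ∈ B).map Prod.fst

lemma exists_eq_some_of_keepSlots_eq_some {B : Finset κ} {τ : J → Option (M × κ)} {i : J} {j : M}
    (h : keepSlots B τ i = some j) : ∃ k, τ i = some (j, k) := by
  simp only [keepSlots, Option.map_eq_some_iff, Option.filter_eq_some_iff] at h
  obtain ⟨⟨j, k⟩, ⟨hτ, -⟩, rfl⟩ := h
  exact ⟨k, hτ⟩

variable [DecidableEq M]

lemma incidence_keepSlots (B : Finset κ) (τ : J → Option (M × κ)) (i : J) (j : M) :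
    incidence (keepSlots B τ) (i, j) = ∑ k ∈ B, incidence τ (i, (j, k)) := by
  rcases h : τ i with _ | ⟨j', k'⟩
  · simp [incidence, keepSlots, h]
  · by_cases hj : j' = j <;> by_cases hk : k' ∈ B <;>
      simp [incidence, keepSlots, Option.filter, h, hj, hk]

variable [Fintype J]

lemma sum_keepSlots_eq_some (B : Finset κ) (τ : J → Option (M × κ)) (s : J → ℝ) (j : M) :
    ∑ i with keepSlots B τ i = some j, s i = ∑ k ∈ B, ∑ i with τ i = some (j, k), s i := by
  simp only [← sum_incidence_mul, incidence_keepSlots, sum_mul]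
  exact sum_comm

/-- The integral assignments into which the fractional assignment `y` may be rounded: those that
use only pairs in the support of `y` and respect the capacities `c`. -/
def roundings (s : J → ℝ) (c : M → ℝ) (y : J × M → ℝ) : Set (J → Option M) :=
  {x | (∀ i j, x i = some j → y (i, j) ≠ 0) ∧ ∀ j, ∑ i with x i = some j, s i ≤ c j}

section KeepSlots

variable {N : ℕ} {s : J → ℝ} {c : M → ℝ} {y : J × M → ℝ} {Y : M → J → Fin (N + 1) → ℝ}
  {τ : J → Option (M × Fin (N + 1))} (hY : ∀ j, IsSlotting univ s (fun i ↦ y (i, j)) (Y j))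
  (hinj : ∀ i i' t, τ i = some t → τ i' = some t → i = i')
  (hpos : ∀ i t, τ i = some t → 0 < Y t.1 i t.2)

include hY hinj hpos

lemma keepSlots_zero_mem_roundings (hc : 0 ≤ c) (hsc : ∀ e, y e ≠ 0 → s e.1 ≤ c e.2) :
    keepSlots {0} τ ∈ roundings s c y := by
  have hsupp : ∀ i j k, τ i = some (j, k) → y (i, j) ≠ 0 := fun i j k h ↦
    ((hY j).pos (mem_univ i) (hpos i _ h)).ne'
  refine ⟨fun i j h ↦ ?_, fun j ↦ ?_⟩
  · obtain ⟨k, hk⟩ := exists_eq_some_of_keepSlots_eq_some h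
    exact hsupp i j k hk
  · rw [sum_keepSlots_eq_some, sum_singleton]
    exact sum_filter_eq_some_le (hinj · · _) (hc j) fun i hi ↦ hsc (i, j) (hsupp i j 0 hi)

-- The job in the slot `k + 1` is no larger than the average job in the slot `k`, so the jobs
-- outside the first slot are together no larger than the fractional load of the machine.
lemma keepSlots_succ_mem_roundings (hs : 0 ≤ s) (hyc : ∀ j, ∑ i, y (i, j) * s i ≤ c j) :
    keepSlots (univ.map (Fin.succEmb N)) τ ∈ roundings s c y := by
  refine ⟨fun i j h ↦ ?_, fun j ↦ ?_⟩
  · obtain ⟨k, hk⟩ := exists_eq_some_of_keepSlots_eq_some h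
    exact ((hY j).pos (mem_univ i) (hpos i _ hk)).ne'
  · rw [sum_keepSlots_eq_some, sum_map]
    calc ∑ k : Fin N, ∑ i with τ i = some (j, k.succ), s i
        ≤ ∑ k : Fin N, ∑ i, Y j i k.castSucc * s i := by
          refine sum_le_sum fun k _ ↦ sum_filter_eq_some_le (hinj · · _)
            (sum_nonneg fun i _ ↦ mul_nonneg ((hY j).nonneg i _) (hs i)) fun i hi ↦ ?_
          exact (hY j).size_le i (mem_univ i) k (hpos i _ hi)
      _ ≤ ∑ i, y (i, j) * s i := (hY j).sum_castSucc_le hs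
      _ ≤ c j := hyc j

lemma half_smul_mem_convexHull_roundings (hs : 0 ≤ s) (hc : 0 ≤ c)
    (hyc : ∀ j, ∑ i, y (i, j) * s i ≤ c j) (hsc : ∀ e, y e ≠ 0 → s e.1 ≤ c e.2) :
    (1 / 2 : ℝ) • (fun e : J × M ↦ ∑ k, incidence τ (e.1, (e.2, k))) ∈
      convexHull ℝ (incidence '' roundings s c y) := by
  have hsplit : (fun e : J × M ↦ ∑ k, incidence τ (e.1, (e.2, k))) =
      incidence (keepSlots {0} τ) + incidence (keepSlots (univ.map (Fin.succEmb N)) τ) := by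
    ext ⟨i, j⟩
    simp [incidence_keepSlots, Fin.sum_univ_succ]
  rw [hsplit, smul_add]
  exact convex_convexHull ℝ _
    (subset_convexHull ℝ _ (Set.mem_image_of_mem _
      (keepSlots_zero_mem_roundings hY hinj hpos hc hsc)))
    (subset_convexHull ℝ _ (Set.mem_image_of_mem _
      (keepSlots_succ_mem_roundings hY hinj hpos hs hyc)))
    (by norm_num) (by norm_num) (by norm_num)

end KeepSlots

theorem half_smul_mem_convexHull_incidence [Fintype M] {s : J → ℝ} {c : M → ℝ} {y : J × M → ℝ}
    (hs : 0 ≤ s) (hc : 0 ≤ c) (hy : 0 ≤ y) (hyJ : jobLoad y ≤ 1)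
    (hyc : ∀ j, ∑ i, y (i, j) * s i ≤ c j) (hsc : ∀ e, y e ≠ 0 → s e.1 ≤ c e.2) :
    (1 / 2 : ℝ) • y ∈ convexHull ℝ (incidence '' roundings s c y) := by
  have hy1 : ∀ i j, y (i, j) ≤ 1 := fun i j ↦
    (single_le_sum (fun j _ ↦ hy (i, j)) (mem_univ j)).trans (hyJ i)
  choose Y hY using fun j ↦ exists_isSlotting (N := Fintype.card J) hs (fun i ↦ hy (i, j)) univ
    (by simpa using sum_le_sum fun i (_ : i ∈ univ) ↦ hy1 i j)
  let Z (e : J × (M × Fin (Fintype.card J + 1))) : ℝ := Y e.2.1 e.1 e.2.2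
  let merge : (J × (M × Fin (Fintype.card J + 1)) → ℝ) →ₗ[ℝ] J × M → ℝ :=
    LinearMap.pi fun e ↦ ∑ k, LinearMap.proj (e.1, (e.2, k))
  have hmerge : ∀ W, merge W = fun e ↦ ∑ k, W (e.1, (e.2, k)) := fun W ↦ by
    ext e; simp [merge]
  have hmergeZ : merge Z = y := by
    rw [hmerge]
    exact funext fun e ↦ (hY e.2).sum_slots e.1 (mem_univ _)
  have hZ := mem_convexHull_matchings (Z := Z) (fun e ↦ (hY e.2.1).nonneg e.1 e.2.2) (fun i ↦ ?_)
    (fun t ↦ ?_)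
  · suffices Z ∈ ((1 / 2 : ℝ) • merge) ⁻¹' convexHull ℝ (incidence '' roundings s c y) by
      rwa [Set.mem_preimage, LinearMap.smul_apply, hmergeZ] at this
    refine convexHull_min ?_ ((convex_convexHull ℝ (incidence '' roundings s c y)).linear_preimage
      ((1 / 2 : ℝ) • merge)) hZ
    rintro _ ⟨τ, ⟨hinj, hpos⟩, rfl⟩
    rw [Set.mem_preimage, LinearMap.smul_apply, hmerge]
    exact half_smul_mem_convexHull_roundings hY hinj hpos hs hc hyc hsc
  · calc jobLoad Z i = ∑ j, ∑ k, Y j i k := Fintype.sum_prod_type _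
      _ = jobLoad y i := sum_congr rfl fun j _ ↦ (hY j).sum_slots i (mem_univ i)
      _ ≤ 1 := hyJ i
  · exact ((hY t.1).sum_jobs t.2).trans_le (slotFill_le_one _ _)

lemma exists_weights_of_mem_convexHull_image {X V : Type*} [Fintype X] [AddCommGroup V]
    [Module ℝ V] {f : X → V} {S : Set X} {y : V} (hy : y ∈ convexHull ℝ (f '' S)) :
    ∃ A ∈ stdSimplex ℝ X, (∀ x, A x ≠ 0 → x ∈ S) ∧ ∑ x, A x • f x = y := by
  classical
  have hconvex : Convex ℝ {A : X → ℝ | ∀ x, x ∉ S → A x = 0} := fun A hA B hB a b _ _ _ x hx ↦ by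
    simp [hA x hx, hB x hx]
  have hsubset : f '' S ⊆ Fintype.linearCombination ℝ f ''
      (stdSimplex ℝ X ∩ {A | ∀ x, x ∉ S → A x = 0}) := by
    rintro _ ⟨x, hx, rfl⟩
    refine ⟨Pi.single x 1, ⟨single_mem_stdSimplex ℝ x, fun x' hx' ↦ ?_⟩, by simp⟩
    exact Pi.single_eq_of_ne (ne_of_mem_of_not_mem hx hx').symm 1
  obtain ⟨A, ⟨hA, hsupp⟩, hAy⟩ := convexHull_min hsubset
    (((convex_stdSimplex ℝ X).inter hconvex).linear_image _) hy
  exact ⟨A, hA, fun x ↦ not_imp_comm.1 (hsupp x), hAy⟩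

end Rounding

section Mechanism

lemma exists_list_pairwise_le {ε : Type*} (d : ε → ℝ) (S : Finset ε) :
    ∃ L : List ε, (L.Pairwise fun a b ↦ d b ≤ d a) ∧ ∀ e, e ∈ L ↔ e ∈ S := by
  classical
  exact ⟨S.toList.insertionSort (d ⁻¹'o (· ≥ ·)), List.pairwise_insertionSort _ _, by simp⟩

variable {n m : ℕ} {v : Fin n × Fin m → ℝ} {s : Fin n → ℝ} {c : Fin m → ℝ}
  {E : Finset (Fin n × Fin m)} {L : List (Fin n × Fin m)}

lemma sum_value_eq_sum_mul_incidence (v : Fin n × Fin m → ℝ) (E : Finset (Fin n × Fin m))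
    (i : Fin n) (x : Fin n → Option (Fin m)) :
    ∑ j with (i, j) ∈ E ∧ x i = some j, v (i, j) =
      ∑ e ∈ E with e.1 = i, v e * incidence x e := by
  rw [← filter_univ_mem E, filter_filter, sum_filter, sum_filter, Fintype.sum_prod_type,
    sum_eq_single_of_mem i (mem_univ i) fun i' _ hi' ↦ by simp [hi']]
  simp [incidence, ite_and]

lemma welfare_eq_sum_mul_incidence (v : Fin n × Fin m → ℝ) (x : Fin n → Option (Fin m)) :
    SIGAPWelfare v x = ∑ e, v e * incidence x e := by
  simp [SIGAPWelfare, incidence, sum_filter, Fintype.sum_prod_type]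

lemma exists_lottery (hs : ∀ i, 0 < s i) (hc : 0 ≤ c) (E : Finset (Fin n × Fin m))
    (hL : ∀ e ∈ L, s e.1 ≤ c e.2) :
    ∃ A ∈ stdSimplex ℝ (Fin n → Option (Fin m)), (∀ x, A x ≠ 0 → SIGAPFeasible s c E x) ∧
      ∀ e, ∑ x, A x * incidence x e = greedy E s c L e / s e.1 / 2 := by
  have hs0 : 0 ≤ s := fun i ↦ (hs i).le
  set y : Fin n × Fin m → ℝ := fun e ↦ greedy E s c L e / s e.1 with hy
  have hsupp : ∀ e, y e ≠ 0 → e ∈ E ∧ e ∈ L := fun e he ↦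
    mem_of_greedy_ne_zero (div_ne_zero_iff.1 he).1
  have hyJ : jobLoad y ≤ 1 := fun i ↦ by
    simp only [jobLoad, hy, ← sum_div]
    exact div_le_one_of_le₀ (jobLoad_greedy_le hs0 L i) (hs0 i)
  have hyc : ∀ j, ∑ i, y (i, j) * s i ≤ c j := fun j ↦ by
    simp only [hy, div_mul_cancel₀ _ (hs _).ne']
    exact machineLoad_greedy_le hc L j
  obtain ⟨A, hA, hAsupp, hAy⟩ := exists_weights_of_mem_convexHull_image
    (half_smul_mem_convexHull_incidence hs0 hc
      (fun e ↦ div_nonneg (greedy_nonneg hs0 hc L e) (hs0 e.1)) hyJ hyc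
      fun e he ↦ hL e (hsupp e he).2)
  refine ⟨A, hA, fun x hx ↦ ⟨fun i j h ↦ (hsupp _ ((hAsupp x hx).1 i j h)).1,
    (hAsupp x hx).2⟩, fun e ↦ ?_⟩
  have hAe := congrFun hAy e
  simp only [Finset.sum_apply, Pi.smul_apply, smul_eq_mul] at hAe
  rw [hAe, one_div_mul_eq_div]

lemma sum_mul_sum_mul_incidence {A : (Fin n → Option (Fin m)) → ℝ}
    (hA : ∀ e, ∑ x, A x * incidence x e = greedy E s c L e / s e.1 / 2)
    (F : Finset (Fin n × Fin m)) :
    ∑ x, A x * ∑ e ∈ F, v e * incidence x e =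
      (∑ e ∈ F, v e / s e.1 * greedy E s c L e) / 2 := by
  simp only [mul_sum, mul_left_comm _ (v _)]
  rw [sum_comm, sum_div]
  refine sum_congr rfl fun e _ ↦ ?_
  rw [← mul_sum, hA]
  ring

lemma welfare_le_two_mul_sum_greedy (hv : 0 ≤ v) (hs : ∀ i, 0 < s i)
    (hL : L.Pairwise fun a b ↦ v b / s b.1 ≤ v a / s a.1)
    (hmem : ∀ e, s e.1 ≤ c e.2 → e ∈ L) {x : Fin n → Option (Fin m)}
    (hx : SIGAPFeasible s c E x) :
    SIGAPWelfare v x ≤ 2 * ∑ e, v e / s e.1 * greedy E s c L e := by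
  have hs0 : 0 ≤ s := fun i ↦ (hs i).le
  have hassigned : ∀ e : Fin n × Fin m, s e.1 * incidence x e ≠ 0 → x e.1 = some e.2 :=
    fun e he ↦ by simpa [incidence, (hs e.1).ne'] using he
  have hjob : jobLoad (fun e ↦ s e.1 * incidence x e) ≤ s := fun i ↦ by
    simp only [jobLoad, ← mul_sum]
    exact mul_le_of_le_one_right (hs0 i) (jobLoad_incidence_le x i)
  have hmachine : machineLoad (fun e ↦ s e.1 * incidence x e) ≤ c := fun j ↦ by
    simpa only [machineLoad, mul_comm (s _), sum_incidence_mul] using hx.2 j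
  have hsize : ∀ e : Fin n × Fin m, x e.1 = some e.2 → s e.1 ≤ c e.2 := fun e he ↦
    (single_le_sum (fun i _ ↦ hs0 i) (mem_filter.2 ⟨mem_univ e.1, he⟩)).trans (hx.2 e.2)
  calc SIGAPWelfare v x = ∑ e, v e / s e.1 * (s e.1 * incidence x e) := by
        rw [welfare_eq_sum_mul_incidence]
        exact sum_congr rfl fun e _ ↦ by rw [← mul_assoc, div_mul_cancel₀ _ (hs e.1).ne']
    _ ≤ 2 * ∑ e, v e / s e.1 * greedy E s c L e :=
        sum_mul_le_two_mul_sum_mul_greedy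
          (fun e ↦ mul_nonneg (hs0 e.1) (by unfold incidence; positivity)) hjob hmachine hL
          (fun e _ ↦ div_nonneg (hv e) (hs0 e.1)) (fun e he ↦ hx.1 e.1 e.2 (hassigned e he))
          fun e he ↦ hmem e (hsize e (hassigned e he))

end Mechanism

end SIGAP

/-- There is a 4-approximate, truthful-in-expectation mechanism without money
for the size-invariant generalized assignment problem in the private graph model. -/
theorem stmt15 (n m : ℕ) (v : Fin n × Fin m → ℝ) (s : Fin n → ℝ) (c : Fin m → ℝ)
    (hv : ∀ p, 0 ≤ v p) (hs : ∀ i, 0 < s i) (hc : ∀ j, 0 ≤ c j) :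
    ∃ A : Finset (Fin n × Fin m) → (Fin n → Option (Fin m)) → ℝ,
      (∀ E x, 0 ≤ A E x) ∧
      (∀ E, ∑ x : Fin n → Option (Fin m), A E x = 1) ∧
      (∀ E x, A E x ≠ 0 → SIGAPFeasible s c E x) ∧
      (∀ (E Ei' : Finset (Fin n × Fin m)) (i : Fin n), (∀ e ∈ Ei', e.1 = i) →
        ∑ x : Fin n → Option (Fin m),
            A ((E \ E.filter (fun e => e.1 = i)) ∪ Ei') x *
              ∑ j ∈ Finset.univ.filter (fun j => (i, j) ∈ E ∧ x i = some j), v (i, j)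
          ≤ ∑ x : Fin n → Option (Fin m),
              A E x * ∑ j ∈ Finset.univ.filter (fun j => (i, j) ∈ E ∧ x i = some j), v (i, j)) ∧
      (∀ E z, SIGAPFeasible s c E z →
        SIGAPWelfare v z ≤ 4 * ∑ x : Fin n → Option (Fin m), A E x * SIGAPWelfare v x) := by
  obtain ⟨L, hsort, hmem⟩ :=
    SIGAP.exists_list_pairwise_le (fun e ↦ v e / s e.1) {e | s e.1 ≤ c e.2}
  simp only [Finset.mem_filter_univ] at hmem
  choose A hA hfeasible hmarginal using fun E ↦
    SIGAP.exists_lottery hs hc E fun e ↦ (hmem e).1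
  refine ⟨A, fun E ↦ (hA E).1, fun E ↦ (hA E).2, hfeasible, fun E Ei' i hEi' ↦ ?_,
    fun E z hz ↦ ?_⟩
  · have hagree : ∀ e : Fin n × Fin m, e.1 ≠ i →
        (e ∈ E ↔ e ∈ (E \ E.filter fun e ↦ e.1 = i) ∪ Ei') := fun e he ↦ by
      simp [he, mt (hEi' e) he]
    simp only [SIGAP.sum_value_eq_sum_mul_incidence,
      SIGAP.sum_mul_sum_mul_incidence (hmarginal _)]
    exact div_le_div_of_nonneg_right (SIGAP.sum_mul_greedy_le_of_mem_iff (fun i ↦ (hs i).le) hc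
      hagree hsort fun e _ ↦ div_nonneg (hv e) (hs e.1).le) zero_le_two
  · calc SIGAPWelfare v z ≤ 2 * ∑ e, v e / s e.1 * SIGAP.greedy E s c L e :=
          SIGAP.welfare_le_two_mul_sum_greedy hv hs hsort (fun e ↦ (hmem e).2) hz
      _ = 4 * ∑ x, A E x * SIGAPWelfare v x := by
          simp only [SIGAP.welfare_eq_sum_mul_incidence,
            SIGAP.sum_mul_sum_mul_incidence (hmarginal E)]
          ring
end
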